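/- arXiv:2510.18661 — 2 statements merged into one kernel-verified Lean document; each statement's English description precedes it below -/
import Mathlib

section
/- Weighted regularization: let S_n^comb be a combinatorial clique n-simplicial complex over a locally finite graph (V,E). If there exists a family of weights (m_i)_{0≤i≤n}, strictly positive exactly on simplices and permutation-invariant, such that the weighted complex S_n = (V,(m_i)) is globally χ-complete, then the Gauss–Bonnet operator D = d + δ and the Hodge Laplacian L = D² are essentially self-adjoint on ⊕_{i=0}^n C_c^i(V) with respect to the Hilbert structure H = ⊕_{i=0}^n ℓ²(m_i) determined by these weights. -/
/-!
Essential self-adjointness says that finitely supported cochains are dense in the graph norm on the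
maximal domain, so the task is to approximate.

*Cut-offs.* The functions `χ_k` are truncated to `[0, 1]` and extended to simplices by their minimum
over the vertices. What the energy bound on the averaged extension controls depends on the parity of
the degree `j`. For odd `j` the signs in `d` do not cancel, and the coboundary of the average is `1`
on the plateau: the bound becomes a bound of `m_{j+1}` by `m_j`, and `d` and `δ` between the degrees
`j` and `j + 1` are bounded operators. For even `j` reordering the simplex isolates the difference
of `χ_k` along the added vertex. In both cases the oscillation of `χ_k` over simplices has uniformly
bounded energy.

*The operator `D`.* The commutators of `d` and `δ` with the cut-offs are dominated by the
oscillation and vanish eventually at every simplex, so they tend to `0` strongly on `ℓ²`. Hence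
`χ_k u → u` in the graph norm of `D`.

*The Laplacian.* In each degree, by parity, one of `δ d` and `d δ` is bounded, so both `δ d u` and
`d δ u` lie in `ℓ²` on the maximal domain of `L`. Testing them against `χ_k² u` and `χ_k² δ u` gives
`d u` and `δ u` in `ℓ²`, and Green's formula makes `L` symmetric on its maximal domain. A pair
`(a, b)` orthogonal to the graph of `L` over finitely supported cochains satisfies `L b = -a`, hence
is orthogonal to the maximal graph as well, so finitely supported cochains form a core.
-/

open Filter Function Set
open scoped Topology

namespace DiscreteHodge

/-- A weighted graph `G = (V, m₀, m₁)`: a strictly positive vertex weight `m₀`, a symmetric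
nonnegative edge weight `m₁`; `x, y` are neighbors iff `m₁ x y > 0`; `G` is locally finite. -/
structure WG (V : Type*) where
  m₀ : V → ℝ
  m₁ : V → V → ℝ
  m₀_pos : ∀ x, 0 < m₀ x
  m₁_nonneg : ∀ x y, 0 ≤ m₁ x y
  m₁_symm : ∀ x y, m₁ x y = m₁ y x
  locFin : ∀ x, {y | 0 < m₁ x y}.Finite

variable {V : Type*}

/-- Adjacency in a weighted graph. -/
def WG.Adj (G : WG V) (x y : V) : Prop := 0 < G.m₁ x y

/-- A tuple of vertices is a simplex of the clique complex iff its vertices are pairwise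
distinct and pairwise adjacent (span a complete subgraph). -/
def IsSimplex (G : WG V) {k : ℕ} (x : Fin k → V) : Prop :=
  Function.Injective x ∧ ∀ a b : Fin k, a ≠ b → G.Adj (x a) (x b)

/-- The family of simplex weights `(m_i)` of the weighted oriented clique `n`-simplicial
complex over `G`: `m i` is defined on `(i+1)`-tuples, extends `m₀, m₁`, is strictly positive
exactly on simplices (for `1 ≤ i ≤ n`) and is invariant under permutations of its arguments. -/
structure CliqueWeights (G : WG V) (n : ℕ) where
  m : ∀ i : ℕ, (Fin (i + 1) → V) → ℝ
  nonneg : ∀ i x, 0 ≤ m i x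
  m_zero : ∀ x : Fin 1 → V, m 0 x = G.m₀ (x 0)
  m_one : ∀ x : Fin 2 → V, m 1 x = G.m₁ (x 0) (x 1)
  pos_iff : ∀ i, 1 ≤ i → i ≤ n → ∀ x : Fin (i + 1) → V, (0 < m i x ↔ IsSimplex G x)
  perm_inv : ∀ i, 1 ≤ i → i ≤ n → ∀ (x : Fin (i + 1) → V) (σ : Equiv.Perm (Fin (i + 1))),
      m i (x ∘ σ) = m i x

/-- An alternating function on tuples. -/
def IsAlternating {k : ℕ} (f : (Fin k → V) → ℂ) : Prop :=
  ∀ (x : Fin k → V) (σ : Equiv.Perm (Fin k)),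
    f (x ∘ σ) = ((Equiv.Perm.sign σ : ℤ) : ℂ) * f x

/-- An `i`-cochain: an alternating function on `(i+1)`-tuples supported on oriented
`i`-simplices.  Elements of `C_c^i(V)` are cochains with finite support. -/
def IsCochain (G : WG V) (i : ℕ) (f : (Fin (i + 1) → V) → ℂ) : Prop :=
  IsAlternating f ∧ ∀ x, ¬ IsSimplex G x → f x = 0

/-- Coboundary operator on the part of the complex lying over `Λ ⊆ V`:
`d_i f(x₁,…,x_{i+1}) = Σ_j (−1)^{j+1} f(x₁,…,x̂_j,…,x_{i+1})` on simplices with all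
vertices in `Λ`, and `0` elsewhere. -/
noncomputable def dOn (G : WG V) (Λ : Set V) (i : ℕ) (f : (Fin (i + 1) → V) → ℂ) :
    (Fin (i + 2) → V) → ℂ :=
  Set.indicator {x | IsSimplex G x ∧ ∀ j, x j ∈ Λ}
    (fun x => ∑ j : Fin (i + 2), (-1 : ℂ) ^ (j : ℕ) * f (x ∘ j.succAbove))

/-- The coboundary operator `d_{i+1} : C_c^i(V) → C_c^{i+1}(V)` (paper index `i+1`). -/
noncomputable def d (G : WG V) (i : ℕ) (f : (Fin (i + 1) → V) → ℂ) :
    (Fin (i + 2) → V) → ℂ :=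
  dOn G Set.univ i f

/-- Codifferential on the part of the complex lying over `Λ ⊆ V`:
`δ g(x₁,…,x_{i+1}) = (1/m_i(x)) Σ_{y ∈ F(x) ∩ Λ} m_{i+1}(x,y) g(x,y)`; vertices outside the
common-neighbor set `F(x)` contribute `0` since `m_{i+1}` vanishes on non-simplices. -/
noncomputable def deltaOn (G : WG V) {n : ℕ} (W : CliqueWeights G n) (Λ : Set V) (i : ℕ)
    (g : (Fin (i + 2) → V) → ℂ) : (Fin (i + 1) → V) → ℂ :=
  fun x => ((W.m i x : ℝ) : ℂ)⁻¹ *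
    ∑' y : V, Set.indicator Λ
      (fun y => ((W.m (i + 1) (Fin.snoc x y) : ℝ) : ℂ) * g (Fin.snoc x y)) y

/-- The codifferential `δ_{i+1} : C_c^{i+1}(V) → C_c^i(V)` (paper index `i+1`). -/
noncomputable def delta (G : WG V) {n : ℕ} (W : CliqueWeights G n) (i : ℕ)
    (g : (Fin (i + 2) → V) → ℂ) : (Fin (i + 1) → V) → ℂ :=
  deltaOn G W Set.univ i g

/-- Squared `ℓ²(m_i)` norm: `‖f‖² = (1/(i+1)!) Σ_σ m_i(σ) |f(σ)|²`. -/
noncomputable def norm2 {G : WG V} {n : ℕ} (W : CliqueWeights G n) (i : ℕ)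
    (f : (Fin (i + 1) → V) → ℂ) : ℝ :=
  ((Nat.factorial (i + 1) : ℝ))⁻¹ * ∑' x : Fin (i + 1) → V, W.m i x * ‖f x‖ ^ 2

/-- Membership in `ℓ²(m_i)`. -/
def MemL2 {G : WG V} {n : ℕ} (W : CliqueWeights G n) (i : ℕ)
    (f : (Fin (i + 1) → V) → ℂ) : Prop :=
  Summable (fun x : Fin (i + 1) → V => W.m i x * ‖f x‖ ^ 2)

/-- The `ℓ²(m_i)` inner product `⟨f,g⟩ = (1/(i+1)!) Σ_σ m_i(σ) f(σ) conj (g σ)`. -/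
noncomputable def inner2 {G : WG V} {n : ℕ} (W : CliqueWeights G n) (i : ℕ)
    (f g : (Fin (i + 1) → V) → ℂ) : ℂ :=
  ((Nat.factorial (i + 1) : ℂ))⁻¹ *
    ∑' x : Fin (i + 1) → V, ((W.m i x : ℝ) : ℂ) * f x * (starRingEnd ℂ) (g x)

/-- Convergence `u k → f` in `ℓ²(m_i)`. -/
def TendstoL2 {G : WG V} {n : ℕ} (W : CliqueWeights G n) (i : ℕ)
    (u : ℕ → (Fin (i + 1) → V) → ℂ) (f : (Fin (i + 1) → V) → ℂ) : Prop :=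
  Tendsto (fun k => norm2 W i (fun x => u k x - f x)) atTop (𝓝 0)

/-- The Gauss–Bonnet operator `D = d + δ` acting componentwise on cochain families:
`(DF)_i = d_i f_{i-1} + δ_{i+1} f_{i+1}` with the end terms absent. -/
noncomputable def Dop (G : WG V) {n : ℕ} (W : CliqueWeights G n)
    (f : ∀ i : ℕ, (Fin (i + 1) → V) → ℂ) : ∀ i : ℕ, (Fin (i + 1) → V) → ℂ
  | 0 => delta G W 0 (f 1)
  | (i + 1) =>
      if i + 1 ≤ n then (fun x => d G i (f i) x + delta G W (i + 1) (f (i + 2)) x) else 0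

/-- The Laplacian block `L_i = δ_{i+1} d_{i+1} + d_i δ_i` on `C_c^i(V)`
(the `d_iδ_i` term absent for `i = 0`, the `δ_{i+1}d_{i+1}` term absent for `i = n`). -/
noncomputable def Lblock (G : WG V) {n : ℕ} (W : CliqueWeights G n) :
    ∀ i : ℕ, ((Fin (i + 1) → V) → ℂ) → (Fin (i + 1) → V) → ℂ
  | 0 => fun g => if 1 ≤ n then delta G W 0 (d G 0 g) else 0
  | (i + 1) => fun g x =>
      (if i + 2 ≤ n then delta G W (i + 1) (d G (i + 1) g) x else 0)
        + d G i (delta G W i g) x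

/-- A family `(f_0, …, f_n)` of cochains, one in each degree (encoded with `f i = 0`
for `i > n`). -/
def CochainFamily (G : WG V) (n : ℕ) (u : ∀ i : ℕ, (Fin (i + 1) → V) → ℂ) : Prop :=
  (∀ i, IsCochain G i (u i)) ∧ ∀ i, n < i → u i = 0

/-- All components finitely supported, i.e. membership in `⊕_{i=0}^n C_c^i(V)`. -/
def FinSuppFamily (u : ∀ i : ℕ, (Fin (i + 1) → V) → ℂ) : Prop :=
  ∀ i, (Function.support (u i)).Finite

/-- Membership in `H = ⊕_{i=0}^n ℓ²(m_i)`. -/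
def MemL2Family {G : WG V} {n : ℕ} (W : CliqueWeights G n)
    (u : ∀ i : ℕ, (Fin (i + 1) → V) → ℂ) : Prop :=
  ∀ i, MemL2 W i (u i)

/-- Componentwise `ℓ²` convergence of cochain families, i.e. convergence in `H`. -/
def TendstoL2Family {G : WG V} {n : ℕ} (W : CliqueWeights G n)
    (u : ℕ → ∀ i : ℕ, (Fin (i + 1) → V) → ℂ)
    (f : ∀ i : ℕ, (Fin (i + 1) → V) → ℂ) : Prop :=
  ∀ i, TendstoL2 W i (fun k => u k i) (f i)

/-- Extension of a vertex function to tuples by averaging: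
`χ̃(x_0,…,x_{k-1}) = (1/k) Σ_j χ(x_j)`. -/
noncomputable def avg (χ : V → ℝ) {k : ℕ} (x : Fin k → V) : ℂ :=
  (k : ℂ)⁻¹ * ∑ j : Fin k, (χ (x j) : ℂ)

/-- The discrete gradient energy of a vertex function `χ` at a `j`-simplex `x` (relative to
the region `Λ`): `(1/m_j(x)) Σ_{y ∈ F(x) ∩ Λ} m_{j+1}(x,y) |d_{j+1} χ̃ (x,y)|²`. -/
noncomputable def gradEnergyOn {G : WG V} {n : ℕ} (W : CliqueWeights G n) (Λ : Set V)
    (j : ℕ) (χ : V → ℝ) (x : Fin (j + 1) → V) : ℝ :=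
  (W.m j x)⁻¹ * ∑' y : V, Set.indicator Λ
    (fun y => W.m (j + 1) (Fin.snoc x y) *
      ‖dOn G Λ j (fun σ : Fin (j + 1) → V => avg χ σ) (Fin.snoc x y)‖ ^ 2) y

/-- `(O, χ)` is a system of plateau cut-offs witnessing global `χ`-completeness of the part
of the complex lying over `Λ`: `(O k)` is an increasing exhaustion of `Λ` by finite sets,
the `χ k` are finitely supported vertex functions whose averages equal `1` on every simplex
with all vertices in `O k`, with a uniform discrete-gradient energy bound in all degrees. -/
def IsChiWitnessOn {G : WG V} {n : ℕ} (W : CliqueWeights G n) (Λ : Set V)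
    (O : ℕ → Set V) (χ : ℕ → V → ℝ) : Prop :=
  (∀ k, (O k).Finite) ∧ Monotone O ∧ (∀ k, O k ⊆ Λ) ∧ (⋃ k, O k) = Λ ∧
  (∀ k, (Function.support (χ k)).Finite) ∧
  (∀ k (i : ℕ), i ≤ n → ∀ x : Fin (i + 1) → V, IsSimplex G x → (∀ j, x j ∈ Λ) →
      (∀ j, x j ∈ O k) → avg (χ k) x = 1) ∧
  ∃ C > 0, ∀ k (j : ℕ), j + 1 ≤ n → ∀ x : Fin (j + 1) → V,
      IsSimplex G x → (∀ a, x a ∈ Λ) → gradEnergyOn W Λ j (χ k) x ≤ C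

/-- Global `χ`-completeness of the restriction of the complex to `Λ`. -/
def GloballyChiCompleteOn {G : WG V} {n : ℕ} (W : CliqueWeights G n) (Λ : Set V) : Prop :=
  ∃ O χ, IsChiWitnessOn W Λ O χ

/-- Global `χ`-completeness of the weighted clique `n`-simplicial complex. -/
def GloballyChiComplete {G : WG V} {n : ℕ} (W : CliqueWeights G n) : Prop :=
  GloballyChiCompleteOn W Set.univ

/-- `(O, χ)` witnesses local `χ`-completeness at level `ℓ`: cut-offs are required only on
`ℓ`-simplices, and the energy bound only in degree `ℓ`. -/
def IsChiWitnessAtLevel {G : WG V} {n : ℕ} (W : CliqueWeights G n) (ℓ : ℕ)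
    (O : ℕ → Set V) (χ : ℕ → V → ℝ) : Prop :=
  (∀ k, (O k).Finite) ∧ Monotone O ∧ (⋃ k, O k) = Set.univ ∧
  (∀ k, (Function.support (χ k)).Finite) ∧
  (∀ k (x : Fin (ℓ + 1) → V), IsSimplex G x → (∀ j, x j ∈ O k) → avg (χ k) x = 1) ∧
  ∃ C > 0, ∀ k (j : ℕ), j + 1 = ℓ → ∀ x : Fin (j + 1) → V,
      IsSimplex G x → gradEnergyOn W Set.univ j (χ k) x ≤ C

/-- Local `χ`-completeness at level `ℓ`. -/
def LocallyChiCompleteAtLevel {G : WG V} {n : ℕ} (W : CliqueWeights G n) (ℓ : ℕ) : Prop :=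
  ∃ O χ, IsChiWitnessAtLevel W ℓ O χ

/-- Essential self-adjointness of the Gauss–Bonnet operator `D = d + δ`, phrased as
`D_min = D_max`: every `u` in the maximal domain (i.e. `u ∈ H` with the pointwise-defined
`Du ∈ H`) is approximated, in the graph norm of `D`, by finitely supported cochain
families (elements of `⊕_{i=0}^n C_c^i(V)`). -/
def ESA_D {G : WG V} {n : ℕ} (W : CliqueWeights G n) : Prop :=
  ∀ u : ∀ i : ℕ, (Fin (i + 1) → V) → ℂ,
    CochainFamily G n u → MemL2Family W u → MemL2Family W (Dop G W u) →
    ∃ uk : ℕ → ∀ i : ℕ, (Fin (i + 1) → V) → ℂ,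
      (∀ k, CochainFamily G n (uk k) ∧ FinSuppFamily (uk k)) ∧
      TendstoL2Family W uk u ∧
      TendstoL2Family W (fun k => Dop G W (uk k)) (Dop G W u)

/-- Essential self-adjointness of the Hodge Laplacian `L = D²`, phrased as `L_min = L_max`
via graph-norm approximation from `⊕_{i=0}^n C_c^i(V)`. -/
def ESA_L {G : WG V} {n : ℕ} (W : CliqueWeights G n) : Prop :=
  ∀ u : ∀ i : ℕ, (Fin (i + 1) → V) → ℂ,
    CochainFamily G n u → MemL2Family W u → MemL2Family W (Dop G W (Dop G W u)) →
    ∃ uk : ℕ → ∀ i : ℕ, (Fin (i + 1) → V) → ℂ,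
      (∀ k, CochainFamily G n (uk k) ∧ FinSuppFamily (uk k)) ∧
      TendstoL2Family W uk u ∧
      TendstoL2Family W (fun k => Dop G W (Dop G W (uk k))) (Dop G W (Dop G W u))

/-! ### Weighted square-summable functions -/

section WeightedL2

open ComplexConjugate

variable {X Y : Type*} {m : X → ℝ} {f g h : X → ℂ}

/-- Membership in the weighted space `ℓ²(X, m)`; for `m = W.m i` this is `MemL2 W i`. -/
def MemWL2 (m : X → ℝ) (f : X → ℂ) : Prop :=
  Summable fun x => m x * ‖f x‖ ^ 2

/-- The squared norm of `ℓ²(X, m)`, without the factor `1 / (i + 1)!` of `norm2`. -/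
noncomputable def wnormSq (m : X → ℝ) (f : X → ℂ) : ℝ :=
  ∑' x, m x * ‖f x‖ ^ 2

/-- The inner product of `ℓ²(X, m)`, linear in the first argument as `inner2` is. -/
noncomputable def wip (m : X → ℝ) (f g : X → ℂ) : ℂ :=
  ∑' x, (m x : ℂ) * f x * conj (g x)

lemma wip_conj (m : X → ℝ) (f g : X → ℂ) : conj (wip m f g) = wip m g f := by
  rw [wip, Complex.conj_tsum]
  refine tsum_congr fun x => ?_
  simp only [map_mul, Complex.conj_ofReal, Complex.conj_conj]
  ring

lemma wip_self (m : X → ℝ) (f : X → ℂ) : wip m f f = wnormSq m f := by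
  rw [wip, wnormSq, Complex.ofReal_tsum]
  refine tsum_congr fun x => ?_
  rw [mul_assoc, Complex.mul_conj, Complex.normSq_eq_norm_sq, ← Complex.ofReal_mul]

lemma wip_zero_left (m : X → ℝ) (g : X → ℂ) : wip m 0 g = 0 := by
  simp [wip]

lemma wip_zero_right (m : X → ℝ) (f : X → ℂ) : wip m f 0 = 0 := by
  simp [wip]

lemma MemWL2.zero (m : X → ℝ) : MemWL2 m 0 := by
  simp [MemWL2]

lemma MemWL2.neg (hf : MemWL2 m f) : MemWL2 m (-f) := by
  simpa [MemWL2] using hf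

lemma MemWL2.of_finite_support (m : X → ℝ) (hf : (support f).Finite) : MemWL2 m f :=
  summable_of_hasFiniteSupport <| hf.subset fun x hx h0 => hx (by simp [h0])

lemma wip_add_left_of_summable (hfh : Summable fun x => (m x : ℂ) * f x * conj (h x))
    (hgh : Summable fun x => (m x : ℂ) * g x * conj (h x)) :
    wip m (f + g) h = wip m f h + wip m g h := by
  simp only [wip, ← hfh.tsum_add hgh, Pi.add_apply, mul_add, add_mul]

lemma wip_add_left_of_finite_support (m : X → ℝ) (hf : (support f).Finite)
    (hg : (support g).Finite) (h : X → ℂ) : wip m (f + g) h = wip m f h + wip m g h :=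
  wip_add_left_of_summable
    (summable_of_hasFiniteSupport <| hf.subset fun x hx h0 => hx (by simp [h0]))
    (summable_of_hasFiniteSupport <| hg.subset fun x hx h0 => hx (by simp [h0]))

lemma wip_add_right_of_finite_support (m : X → ℝ) (f g : X → ℂ) (hh : (support h).Finite) :
    wip m h (f + g) = wip m h f + wip m h g := by
  rw [← wip_conj, wip_add_left_of_summable, map_add, wip_conj, wip_conj] <;>
  exact summable_of_hasFiniteSupport <| hh.subset fun x hx h0 => hx (by simp [h0])

variable (hm : ∀ x, 0 ≤ m x)
include hm

lemma wnormSq_nonneg (f : X → ℂ) : 0 ≤ wnormSq m f :=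
  tsum_nonneg fun x => mul_nonneg (hm x) (sq_nonneg _)

lemma eq_zero_of_wnormSq_eq_zero (hf : MemWL2 m f) (h0 : wnormSq m f = 0) {x : X}
    (hx : 0 < m x) : f x = 0 := by
  have hterm := congrFun ((hasSum_zero_iff_of_nonneg
    fun x => mul_nonneg (hm x) (sq_nonneg ‖f x‖)).1 (by rw [← h0]; exact Summable.hasSum hf)) x
  simpa [hx.ne'] using hterm

lemma MemWL2.of_norm_le (hg : MemWL2 m g) (hfg : ∀ x, ‖f x‖ ≤ ‖g x‖) : MemWL2 m f :=
  hg.of_nonneg_of_le (fun x => mul_nonneg (hm x) (sq_nonneg _))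
    fun x => mul_le_mul_of_nonneg_left (by gcongr; exact hfg x) (hm x)

lemma wnormSq_le_of_norm_le (hg : MemWL2 m g) (hfg : ∀ x, ‖f x‖ ≤ ‖g x‖) :
    wnormSq m f ≤ wnormSq m g :=
  (MemWL2.of_norm_le hm hg hfg).tsum_le_tsum
    (fun x => mul_le_mul_of_nonneg_left (by gcongr; exact hfg x) (hm x)) hg

lemma memℓp_sqrt_mul_iff :
    Memℓp (fun x => (√(m x) : ℂ) * f x) 2 ↔ MemWL2 m f := by
  rw [memℓp_gen_iff (by simp)]
  refine summable_congr fun x => ?_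
  simp only [ENNReal.toReal_ofNat, Real.rpow_ofNat, norm_mul, Complex.norm_real, mul_pow,
    Real.norm_eq_abs, sq_abs, Real.sq_sqrt (hm x)]

/-- The isometric embedding `f ↦ √m · f` of `ℓ²(X, m)` into `ℓ²(X)`. -/
noncomputable def MemWL2.toLp (hf : MemWL2 m f) : lp (fun _ : X => ℂ) 2 :=
  ⟨fun x => (√(m x) : ℂ) * f x, (memℓp_sqrt_mul_iff hm).2 hf⟩

lemma MemWL2.hasSum_inner_toLp (hf : MemWL2 m f) (hg : MemWL2 m g) :
    HasSum (fun x => (m x : ℂ) * f x * conj (g x)) (inner ℂ (hg.toLp hm) (hf.toLp hm)) := by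
  refine (lp.hasSum_inner (hg.toLp hm) (hf.toLp hm)).congr_fun fun x => ?_
  have hsqrt : (√(m x) : ℂ) * √(m x) = m x := by
    rw [← Complex.ofReal_mul, Real.mul_self_sqrt (hm x)]
  simp only [MemWL2.toLp, RCLike.inner_apply, map_mul, Complex.conj_ofReal, ← hsqrt]
  ring

lemma MemWL2.inner_toLp (hf : MemWL2 m f) (hg : MemWL2 m g) :
    inner ℂ (hg.toLp hm) (hf.toLp hm) = wip m f g :=
  (hf.hasSum_inner_toLp hm hg).tsum_eq.symm

lemma MemWL2.norm_toLp_sq (hf : MemWL2 m f) : ‖hf.toLp hm‖ ^ 2 = wnormSq m f := by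
  have h := inner_self_eq_norm_sq_to_K (𝕜 := ℂ) (hf.toLp hm)
  rw [hf.inner_toLp hm hf, wip_self] at h
  exact Complex.ofReal_injective (by push_cast; exact h.symm)

lemma MemWL2.add (hf : MemWL2 m f) (hg : MemWL2 m g) : MemWL2 m (f + g) := by
  rw [← memℓp_sqrt_mul_iff hm]
  simp only [Pi.add_apply, mul_add]
  exact ((memℓp_sqrt_mul_iff hm).2 hf).add ((memℓp_sqrt_mul_iff hm).2 hg)

lemma MemWL2.sub (hf : MemWL2 m f) (hg : MemWL2 m g) : MemWL2 m (f - g) := by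
  simpa only [sub_eq_add_neg] using hf.add hm hg.neg

lemma MemWL2.toLp_sub (hf : MemWL2 m f) (hg : MemWL2 m g) :
    (hf.sub hm hg).toLp hm = hf.toLp hm - hg.toLp hm := by
  ext x
  simp only [MemWL2.toLp, Pi.sub_apply, mul_sub, lp.coeFn_sub]

lemma MemWL2.summable_wip (hf : MemWL2 m f) (hg : MemWL2 m g) :
    Summable fun x => (m x : ℂ) * f x * conj (g x) :=
  (hf.hasSum_inner_toLp hm hg).summable

lemma wip_add_left (hf : MemWL2 m f) (hg : MemWL2 m g) (hh : MemWL2 m h) :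
    wip m (f + g) h = wip m f h + wip m g h :=
  wip_add_left_of_summable (hf.summable_wip hm hh) (hg.summable_wip hm hh)

lemma wip_add_right (hf : MemWL2 m f) (hg : MemWL2 m g) (hh : MemWL2 m h) :
    wip m h (f + g) = wip m h f + wip m h g := by
  rw [← wip_conj, wip_add_left hm hf hg hh, map_add, wip_conj, wip_conj]

lemma norm_wip_sq_le (hf : MemWL2 m f) (hg : MemWL2 m g) :
    ‖wip m f g‖ ^ 2 ≤ wnormSq m f * wnormSq m g := by
  rw [← hf.inner_toLp hm hg, ← hf.norm_toLp_sq hm, ← hg.norm_toLp_sq hm, ← mul_pow, mul_comm]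
  gcongr
  exact norm_inner_le_norm _ _

lemma wnormSq_add_le (hf : MemWL2 m f) (hg : MemWL2 m g) :
    wnormSq m (f + g) ≤ 2 * wnormSq m f + 2 * wnormSq m g := by
  rw [wnormSq, wnormSq, wnormSq, ← tsum_mul_left, ← tsum_mul_left,
    ← (hf.mul_left 2).tsum_add (hg.mul_left 2)]
  refine (hf.add hm hg).tsum_le_tsum (fun x => ?_) ((hf.mul_left 2).add (hg.mul_left 2))
  have hsq : ‖f x + g x‖ ^ 2 ≤ 2 * (‖f x‖ ^ 2 + ‖g x‖ ^ 2) :=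
    (pow_le_pow_left₀ (norm_nonneg _) (norm_add_le _ _) 2).trans add_sq_le
  calc m x * ‖f x + g x‖ ^ 2 ≤ m x * (2 * (‖f x‖ ^ 2 + ‖g x‖ ^ 2)) :=
        mul_le_mul_of_nonneg_left hsq (hm x)
    _ = 2 * (m x * ‖f x‖ ^ 2) + 2 * (m x * ‖g x‖ ^ 2) := by ring

/-- Fatou's lemma for a sequence that is eventually constant at every point. -/
lemma MemWL2.of_eventually_eq {F : ℕ → X → ℂ} {B : ℝ} (hF : ∀ k, MemWL2 m (F k))
    (hB : ∀ k, wnormSq m (F k) ≤ B) (hFf : ∀ x, ∀ᶠ k in atTop, F k x = f x) : MemWL2 m f := by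
  refine summable_of_sum_le (fun x => mul_nonneg (hm x) (sq_nonneg _)) (c := B) fun s => ?_
  obtain ⟨k, hk⟩ := ((eventually_all_finset s).2 fun x _ => hFf x).exists
  calc ∑ x ∈ s, m x * ‖f x‖ ^ 2 = ∑ x ∈ s, m x * ‖F k x‖ ^ 2 :=
        Finset.sum_congr rfl fun x hx => by rw [hk x hx]
    _ ≤ wnormSq m (F k) := (hF k).sum_le_tsum s fun x _ => mul_nonneg (hm x) (sq_nonneg _)
    _ ≤ B := hB k

omit hm in
lemma MemWL2.comp_injective {w : X → ℂ} (hw : MemWL2 m w) {e : Y → X} (he : Injective e) :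
    MemWL2 (m ∘ e) (w ∘ e) :=
  Summable.comp_injective hw he

lemma wnormSq_comp_injective_le {w : X → ℂ} (hw : MemWL2 m w) {e : Y → X} (he : Injective e) :
    wnormSq (m ∘ e) (w ∘ e) ≤ wnormSq m w :=
  tsum_comp_le_tsum_of_inj hw (fun x => mul_nonneg (hm x) (sq_nonneg _)) he

end WeightedL2

section NullSequences

open ComplexConjugate

variable {X : Type*} {m : X → ℝ} {F F' : ℕ → X → ℂ} {f g : X → ℂ}

/-- A sequence converging to `0` in `ℓ²(X, m)`. Membership is part of the notion because
`wnormSq` takes the junk value `0` outside `ℓ²(X, m)`. -/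
structure NullSeq (m : X → ℝ) (F : ℕ → X → ℂ) : Prop where
  mem : ∀ k, MemWL2 m (F k)
  tendsto : Tendsto (fun k => wnormSq m (F k)) atTop (𝓝 0)

lemma NullSeq.zero (m : X → ℝ) : NullSeq m fun _ => 0 where
  mem _ := MemWL2.zero m
  tendsto := by simp [wnormSq]

variable (hm : ∀ x, 0 ≤ m x)
include hm

lemma NullSeq.of_wnormSq_le {a : ℕ → ℝ} (hF : ∀ k, MemWL2 m (F k))
    (hFa : ∀ k, wnormSq m (F k) ≤ a k) (ha : Tendsto a atTop (𝓝 0)) : NullSeq m F where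
  mem := hF
  tendsto := squeeze_zero (fun _ => wnormSq_nonneg hm _) hFa ha

lemma NullSeq.add (hF : NullSeq m F) (hF' : NullSeq m F') :
    NullSeq m fun k => F k + F' k := by
  refine .of_wnormSq_le hm (fun k => (hF.mem k).add hm (hF'.mem k))
    (fun k => wnormSq_add_le hm (hF.mem k) (hF'.mem k)) ?_
  simpa using (hF.tendsto.const_mul 2).add (hF'.tendsto.const_mul 2)

lemma NullSeq.of_dominated (hg : MemWL2 m g) (hFg : ∀ k x, ‖F k x‖ ≤ ‖g x‖)
    (hF : ∀ x, Tendsto (fun k => F k x) atTop (𝓝 0)) : NullSeq m F where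
  mem k := hg.of_norm_le hm (hFg k)
  tendsto := by
    have hlim : Tendsto (fun k => wnormSq m (F k)) atTop (𝓝 (∑' x, m x * ‖(0 : ℂ)‖ ^ 2)) := by
      refine tendsto_tsum_of_dominated_convergence hg
        (fun x => (((hF x).norm).pow 2).const_mul (m x)) (Eventually.of_forall fun k x => ?_)
      rw [Real.norm_of_nonneg (mul_nonneg (hm x) (sq_nonneg _))]
      exact mul_le_mul_of_nonneg_left (by gcongr; exact hFg k x) (hm x)
    simpa using hlim

lemma NullSeq.comp_injective {Y : Type*} (hF : NullSeq m F) {e : Y → X} (he : Injective e) :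
    NullSeq (m ∘ e) fun k => F k ∘ e :=
  .of_wnormSq_le (fun y => hm (e y)) (fun k => (hF.mem k).comp_injective he)
    (fun k => wnormSq_comp_injective_le hm (hF.mem k) he) hF.tendsto

lemma NullSeq.tendsto_wip (hF : NullSeq m fun k => F k - f) (hf : MemWL2 m f)
    (hg : MemWL2 m g) : Tendsto (fun k => wip m (F k) g) atTop (𝓝 (wip m f g)) := by
  have hsq : Tendsto (fun k => ‖wip m (F k - f) g‖ ^ 2) atTop (𝓝 0) :=
    squeeze_zero (fun k => sq_nonneg _) (fun k => norm_wip_sq_le hm (hF.mem k) hg)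
      (by simpa using hF.tendsto.mul_const (wnormSq m g))
  have hnull : Tendsto (fun k => wip m (F k - f) g) atTop (𝓝 0) := by
    rw [tendsto_zero_iff_norm_tendsto_zero]
    simpa using hsq.sqrt
  have hadd : ∀ k, wip m (F k) g = wip m (F k - f) g + wip m f g := fun k => by
    rw [← wip_add_left hm (hF.mem k) hf hg, sub_add_cancel]
  simpa only [hadd, zero_add] using hnull.add_const (wip m f g)

end NullSequences

/-! ### A density criterion -/

section Density

open ComplexConjugate

lemma mem_topologicalClosure_of_orthogonal {E : Type*} [NormedAddCommGroup E]
    [InnerProductSpace ℂ E] [CompleteSpace E] {K M : Submodule ℂ E} (hKM : K ≤ M)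
    (hM : IsClosed (M : Set E)) {e : E} (he : e ∈ M)
    (horth : ∀ w ∈ M, w ∈ Kᗮ → inner ℂ w e = 0) : e ∈ K.topologicalClosure := by
  have : CompleteSpace K.topologicalClosure :=
    K.isClosed_topologicalClosure.completeSpace_coe
  obtain ⟨p, hp, w, hw, rfl⟩ := K.topologicalClosure.exists_add_mem_mem_orthogonal e
  have hwM : w ∈ M := by
    simpa using M.sub_mem he (K.topologicalClosure_minimal hKM hM hp)
  have hwp : inner ℂ w p = 0 := (Submodule.mem_orthogonal' _ _).1 hw p hp
  have hww : inner ℂ w w = 0 := by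
    have h := horth w hwM (K.orthogonal_closure ▸ hw)
    rwa [inner_add_right, hwp, zero_add] at h
  rw [inner_self_eq_zero.1 hww, add_zero]
  exact hp

variable {X : Type*} {m : X → ℝ} {f g : X → ℂ} (hm : ∀ x, 0 ≤ m x)
include hm

lemma exists_toLp_eq (w : lp (fun _ : X => ℂ) 2) (hw : ∀ x, m x = 0 → w x = 0) :
    ∃ hf : MemWL2 m fun x => (√(m x) : ℂ)⁻¹ * w x, hf.toLp hm = w := by
  have hcancel : ∀ x, (√(m x) : ℂ) * ((√(m x) : ℂ)⁻¹ * w x) = w x := fun x => by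
    by_cases hx : m x = 0
    · simp [hx, hw x hx]
    · exact mul_inv_cancel_left₀
        (Complex.ofReal_ne_zero.2 (Real.sqrt_ne_zero'.2 ((hm x).lt_of_ne' hx))) _
  have hf : MemWL2 m fun x => (√(m x) : ℂ)⁻¹ * w x := by
    rw [← memℓp_sqrt_mul_iff hm]
    simp only [hcancel]
    exact w.2
  exact ⟨hf, lp.ext (funext hcancel)⟩

/-- Multiplication by functions of `m` has to preserve `A` so that `A` can be transported to `ℓ²(X)`
and back. -/
lemma exists_nullSeq_sub_of_orthogonal {A S : Submodule ℂ (X → ℂ)} (hSA : S ≤ A)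
    (hA : IsClosed (A : Set (X → ℂ)))
    (hAm : ∀ (φ : ℝ → ℂ), ∀ f ∈ A, (fun x => φ (m x) * f x) ∈ A)
    (hA0 : ∀ f ∈ A, ∀ x, m x = 0 → f x = 0) (hS : ∀ f ∈ S, MemWL2 m f)
    {u : X → ℂ} (hu : u ∈ A) (hu2 : MemWL2 m u)
    (horth : ∀ a ∈ A, MemWL2 m a → (∀ f ∈ S, wip m f a = 0) → wip m u a = 0) :
    ∃ φ : ℕ → X → ℂ, (∀ k, φ k ∈ S) ∧ NullSeq m fun k => φ k - u := by
  let Φ : S →ₗ[ℂ] lp (fun _ : X => ℂ) 2 :=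
    { toFun := fun f => (hS f f.2).toLp hm
      map_add' := fun f g => lp.ext (funext fun x => mul_add _ _ _)
      map_smul' := fun c f => lp.ext (funext fun x => mul_left_comm _ _ _) }
  let M : Submodule ℂ (lp (fun _ : X => ℂ) 2) := A.comap (lpSubmodule ℂ _ 2).subtype
  have hM : IsClosed (M : Set (lp (fun _ : X => ℂ) 2)) :=
    hA.preimage lp.uniformContinuous_coe.continuous
  have hΦM : Φ.range ≤ M := by
    rintro _ ⟨f, rfl⟩
    exact hAm (fun r => √r) f (hSA f.2)
  have hclosure : hu2.toLp hm ∈ Φ.range.topologicalClosure := by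
    refine mem_topologicalClosure_of_orthogonal hΦM hM (hAm (fun r => √r) u hu)
      fun w hwM hw => ?_
    obtain ⟨ha, hweq⟩ := exists_toLp_eq hm w (hA0 w hwM)
    rw [← hweq, hu2.inner_toLp hm ha]
    refine horth _ (hAm (fun r => (√r : ℂ)⁻¹) w hwM) ha fun f hf => ?_
    rw [← (hS f hf).inner_toLp hm ha, hweq]
    exact (Submodule.mem_orthogonal' _ _).1 hw _ ⟨⟨f, hf⟩, rfl⟩
  obtain ⟨s, hs, hslim⟩ := mem_closure_iff_seq_limit.1 hclosure
  choose φ hφ using hs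
  refine ⟨fun k => φ k, fun k => (φ k).2, fun k => (hS _ (φ k).2).sub hm hu2, ?_⟩
  have hnorm : ∀ k, wnormSq m ((φ k : X → ℂ) - u) = ‖s k - hu2.toLp hm‖ ^ 2 := fun k => by
    rw [← MemWL2.norm_toLp_sq hm ((hS _ (φ k).2).sub hm hu2),
      MemWL2.toLp_sub hm (hS _ (φ k).2) hu2, ← hφ k]
    rfl
  simpa [hnorm] using (tendsto_iff_norm_sub_tendsto_zero.1 hslim).pow 2

omit hm in
lemma MemWL2.sumElim (hf : MemWL2 m f) (hg : MemWL2 m g) :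
    MemWL2 (Sum.elim m m) (Sum.elim f g) :=
  Summable.sum _ hf hg

lemma wip_sumElim {a b : X → ℂ} (hf : MemWL2 m f) (hg : MemWL2 m g) (ha : MemWL2 m a)
    (hb : MemWL2 m b) :
    wip (Sum.elim m m) (Sum.elim f g) (Sum.elim a b) = wip m f a + wip m g b :=
  Summable.tsum_sum (hf.summable_wip hm ha) (hg.summable_wip hm hb)

/-- Apply `exists_nullSeq_sub_of_orthogonal` to the graph of `T` over `S`, inside `ℓ²(X ⊕ X)`. -/
lemma exists_nullSeq_graph_sub_of_orthogonal {A S : Submodule ℂ (X → ℂ)} (hSA : S ≤ A)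
    (hA : IsClosed (A : Set (X → ℂ)))
    (hAm : ∀ (φ : ℝ → ℂ), ∀ f ∈ A, (fun x => φ (m x) * f x) ∈ A)
    (hA0 : ∀ f ∈ A, ∀ x, m x = 0 → f x = 0) (hS : ∀ f ∈ S, MemWL2 m f)
    (T : (X → ℂ) →ₗ[ℂ] (X → ℂ)) (hTA : ∀ f ∈ A, T f ∈ A) (hTS : ∀ f ∈ S, MemWL2 m (T f))
    {u : X → ℂ} (hu : u ∈ A) (hu2 : MemWL2 m u) (hTu2 : MemWL2 m (T u))
    (horth : ∀ a ∈ A, ∀ b ∈ A, MemWL2 m a → MemWL2 m b →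
      (∀ f ∈ S, wip m f a + wip m (T f) b = 0) → wip m u a + wip m (T u) b = 0) :
    ∃ φ : ℕ → X → ℂ, (∀ k, φ k ∈ S) ∧ NullSeq m (fun k => φ k - u) ∧
      NullSeq m fun k => T (φ k) - T u := by
  have hm2 : ∀ x, 0 ≤ Sum.elim m m x := Sum.forall.2 ⟨hm, hm⟩
  let graph : (X → ℂ) →ₗ[ℂ] (X ⊕ X → ℂ) :=
    (LinearEquiv.sumArrowLequivProdArrow X X ℂ ℂ).symm ∘ₗ LinearMap.id.prod T
  let A₂ : Submodule ℂ (X ⊕ X → ℂ) :=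
    A.comap (LinearMap.funLeft ℂ ℂ Sum.inl) ⊓ A.comap (LinearMap.funLeft ℂ ℂ Sum.inr)
  have hA₂ : IsClosed (A₂ : Set (X ⊕ X → ℂ)) :=
    (hA.preimage (continuous_pi fun x => continuous_apply (Sum.inl x))).inter
      (hA.preimage (continuous_pi fun x => continuous_apply (Sum.inr x)))
  have hgraph : ∀ f ∈ A, graph f ∈ A₂ := fun f hf => ⟨hf, hTA f hf⟩
  obtain ⟨ψ, hψ, hlim⟩ := exists_nullSeq_sub_of_orthogonal hm2
    (A := A₂) (S := S.map graph) (by rintro _ ⟨f, hf, rfl⟩; exact hgraph f (hSA hf)) hA₂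
    (fun φ w hw => ⟨hAm φ _ hw.1, hAm φ _ hw.2⟩)
    (fun w hw => Sum.forall.2 ⟨hA0 _ hw.1, hA0 _ hw.2⟩)
    (by rintro _ ⟨f, hf, rfl⟩; exact (hS f hf).sumElim (hTS f hf))
    (hgraph u hu) (hu2.sumElim hTu2) (fun w hw hw2 hwS => by
      have ha := hw2.comp_injective Sum.inl_injective
      have hb := hw2.comp_injective Sum.inr_injective
      rw [← Sum.elim_comp_inl_inr w] at hwS ⊢
      refine (wip_sumElim hm hu2 hTu2 ha hb).trans
        (horth _ hw.1 _ hw.2 ha hb fun f hf => ?_)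
      exact (wip_sumElim hm (hS f hf) (hTS f hf) ha hb).symm.trans (hwS _ ⟨f, hf, rfl⟩))
  choose φ hφ hφψ using hψ
  obtain rfl : (fun k => graph (φ k)) = ψ := funext hφψ
  exact ⟨φ, hφ, hlim.comp_injective hm2 Sum.inl_injective,
    hlim.comp_injective hm2 Sum.inr_injective⟩

end Density

/-! ### Simplices, faces and the operators `d`, `δ` -/

section Simplices

variable {G : WG V} {n : ℕ}

lemma weight_pos_iff (W : CliqueWeights G n) {i : ℕ} (hi : i ≤ n) (x : Fin (i + 1) → V) :
    0 < W.m i x ↔ IsSimplex G x := by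
  rcases Nat.eq_zero_or_pos i with rfl | h
  · rw [W.m_zero]
    exact iff_of_true (G.m₀_pos _) ⟨fun a b _ => by lia, fun a b hab => by lia⟩
  · exact W.pos_iff i h hi x

lemma weight_eq_zero (W : CliqueWeights G n) {i : ℕ} (hi : i ≤ n) {x : Fin (i + 1) → V}
    (h : ¬ IsSimplex G x) : W.m i x = 0 :=
  le_antisymm (not_lt.1 (mt (weight_pos_iff W hi x).1 h)) (W.nonneg i x)

lemma weight_comp_perm (W : CliqueWeights G n) {i : ℕ} (hi : i ≤ n) (x : Fin (i + 1) → V)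
    (σ : Equiv.Perm (Fin (i + 1))) : W.m i (x ∘ σ) = W.m i x := by
  rcases Nat.eq_zero_or_pos i with rfl | h
  · have hσ : x ∘ σ = x := funext fun a => congrArg x (by lia)
    rw [hσ]
  · exact W.perm_inv i h hi x σ

lemma IsSimplex.comp {k l : ℕ} {x : Fin k → V} (hx : IsSimplex G x) {e : Fin l → Fin k}
    (he : Injective e) : IsSimplex G (x ∘ e) :=
  ⟨hx.1.comp he, fun _ _ hab => hx.2 _ _ (he.ne hab)⟩

lemma isSimplex_comp_perm_iff {k : ℕ} {x : Fin k → V} (σ : Equiv.Perm (Fin k)) :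
    IsSimplex G (x ∘ σ) ↔ IsSimplex G x := by
  refine ⟨fun h => ?_, fun h => h.comp σ.injective⟩
  simpa [comp_assoc] using h.comp σ.symm.injective

lemma insertNth_eq_cons_comp_cycleRange {k : ℕ} (j : Fin (k + 1)) (y : V) (x : Fin k → V) :
    (Fin.insertNth j y x : Fin (k + 1) → V) =
      (Fin.cons y x : Fin (k + 1) → V) ∘ j.cycleRange := by
  funext a
  refine Fin.succAboveCases j ?_ (fun b => ?_) a
  · simp [Fin.cycleRange_self]
  · simp [Fin.cycleRange_succAbove]

lemma insertNth_comp_succAbove {k : ℕ} (j : Fin (k + 1)) (y : V) (x : Fin k → V) :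
    (Fin.insertNth j y x : Fin (k + 1) → V) ∘ j.succAbove = x :=
  funext fun a => by simp

lemma snoc_comp_castSucc {k : ℕ} (x : Fin k → V) (y : V) :
    (Fin.snoc x y : Fin (k + 1) → V) ∘ Fin.castSucc = x :=
  funext fun a => by simp

lemma insertNth_eq_snoc_of_comp_perm {α : Type*} {k : ℕ} {ρ : (Fin (k + 1) → V) → α}
    (hρ : ∀ τ (σ : Equiv.Perm (Fin (k + 1))), ρ (τ ∘ σ) = ρ τ) (j : Fin (k + 1)) (y : V)
    (x : Fin k → V) : ρ (Fin.insertNth j y x) = ρ (Fin.snoc x y) := by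
  rw [← Fin.insertNth_last', insertNth_eq_cons_comp_cycleRange,
    insertNth_eq_cons_comp_cycleRange, hρ, hρ]

lemma weight_insertNth (W : CliqueWeights G n) {i : ℕ} (hi : i + 1 ≤ n)
    (j : Fin (i + 2)) (y : V) (x : Fin (i + 1) → V) :
    W.m (i + 1) (Fin.insertNth j y x) = W.m (i + 1) (Fin.snoc x y) :=
  insertNth_eq_snoc_of_comp_perm (weight_comp_perm W hi) j y x

lemma cons_comp_perm {k : ℕ} (y : V) (x : Fin k → V) (σ : Equiv.Perm (Fin k)) :
    (Fin.cons y (x ∘ σ) : Fin (k + 1) → V) =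
      (Fin.cons y x : Fin (k + 1) → V) ∘ Equiv.Perm.decomposeFin.symm (0, σ) := by
  funext a
  refine Fin.cases ?_ (fun b => ?_) a <;> simp

lemma weight_snoc_comp_perm (W : CliqueWeights G n) {i : ℕ} (hi : i + 1 ≤ n)
    (x : Fin (i + 1) → V) (σ : Equiv.Perm (Fin (i + 1))) (y : V) :
    W.m (i + 1) (Fin.snoc (x ∘ σ) y) = W.m (i + 1) (Fin.snoc x y) := by
  rw [← weight_insertNth W hi 0, ← weight_insertNth W hi 0, Fin.insertNth_zero',
    Fin.insertNth_zero', cons_comp_perm, weight_comp_perm W hi]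

lemma IsSimplex.of_snoc {k : ℕ} {x : Fin k → V} {y : V}
    (h : IsSimplex G (Fin.snoc x y : Fin (k + 1) → V)) : IsSimplex G x :=
  snoc_comp_castSucc x y ▸ h.comp (Fin.castSucc_injective k)

lemma IsSimplex.adj_of_snoc {k : ℕ} {x : Fin (k + 1) → V} {y : V}
    (h : IsSimplex G (Fin.snoc x y : Fin (k + 2) → V)) : G.Adj (x 0) y := by
  simpa only [Fin.snoc_castSucc, Fin.snoc_last] using
    h.2 (Fin.castSucc 0) (Fin.last _) (Fin.castSucc_ne_last 0)

lemma finite_weight_snoc_ne_zero (W : CliqueWeights G n) {i : ℕ} (hi : i + 1 ≤ n)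
    (x : Fin (i + 1) → V) : {y | W.m (i + 1) (Fin.snoc x y) ≠ 0}.Finite :=
  (G.locFin (x 0)).subset fun _ hy =>
    IsSimplex.adj_of_snoc (by_contra fun h => hy (weight_eq_zero W hi h))

lemma weight_snoc_eq_zero (W : CliqueWeights G n) {i : ℕ} (hi : i + 1 ≤ n)
    {x : Fin (i + 1) → V} (h : W.m i x = 0) (y : V) : W.m (i + 1) (Fin.snoc x y) = 0 :=
  weight_eq_zero W hi fun hs => ((weight_pos_iff W (by lia) x).2 hs.of_snoc).ne' h

lemma summable_weight_snoc_mul (W : CliqueWeights G n) {i : ℕ} (hi : i + 1 ≤ n)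
    (x : Fin (i + 1) → V) (h : V → ℝ) : Summable fun y => W.m (i + 1) (Fin.snoc x y) * h y :=
  summable_of_hasFiniteSupport <| (finite_weight_snoc_ne_zero W hi x).subset
    fun _ hy => left_ne_zero_of_mul hy

lemma summable_weight_snoc_mul_complex (W : CliqueWeights G n) {i : ℕ} (hi : i + 1 ≤ n)
    (x : Fin (i + 1) → V) (h : V → ℂ) :
    Summable fun y => (W.m (i + 1) (Fin.snoc x y) : ℂ) * h y :=
  summable_of_hasFiniteSupport <| (finite_weight_snoc_ne_zero W hi x).subset
    fun _ hy => Complex.ofReal_ne_zero.1 (left_ne_zero_of_mul hy)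

end Simplices

section Alternation

lemma exists_perm_comp_succAbove {k : ℕ} (σ : Equiv.Perm (Fin (k + 1))) (j : Fin (k + 1)) :
    ∃ τ : Equiv.Perm (Fin k), σ ∘ j.succAbove = (σ j).succAbove ∘ τ ∧
      Equiv.Perm.sign τ = (-1) ^ (σ j : ℕ) * (-1) ^ (j : ℕ) * Equiv.Perm.sign σ := by
  set ρ : Equiv.Perm (Fin (k + 1)) := (σ j).cycleRange * σ * j.cycleRange⁻¹ with hρ
  obtain ⟨⟨p, τ⟩, hτ⟩ := Equiv.Perm.decomposeFin.symm.surjective ρ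
  have hp : p = 0 := by
    rw [← Equiv.Perm.decomposeFin_symm_apply_zero p τ, hτ]
    simp [hρ, Equiv.Perm.mul_apply, Equiv.Perm.inv_def, Fin.cycleRange_symm_zero,
      Fin.cycleRange_self]
  subst hp
  refine ⟨τ, funext fun a => ?_, ?_⟩
  · have hsucc : (σ j).cycleRange (σ (j.succAbove a)) = (τ a).succ := by
      have h := congrArg (fun ρ => ρ a.succ) hτ
      simpa [hρ, Equiv.Perm.mul_apply, Equiv.Perm.inv_def, Fin.cycleRange_symm_succ]
        using h.symm
    rw [comp_apply, comp_apply, ← Fin.cycleRange_symm_succ (σ j), ← hsucc,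
      Equiv.symm_apply_apply]
  · have hsign := congrArg Equiv.Perm.sign hτ
    simp only [hρ, Fin.sign_cycleRange, Equiv.Perm.sign_mul, Equiv.Perm.sign_inv,
      Equiv.Perm.decomposeFin.symm_sign, if_true, one_mul] at hsign
    rw [hsign, mul_right_comm]

lemma IsAlternating.comp_insertNth {k : ℕ} {v : (Fin (k + 1) → V) → ℂ} (hv : IsAlternating v)
    (j : Fin (k + 1)) (y : V) (x : Fin k → V) :
    v (Fin.insertNth j y x) = (-1) ^ (j : ℕ) * v (Fin.cons y x) := by
  rw [insertNth_eq_cons_comp_cycleRange, hv, Fin.sign_cycleRange]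
  simp

lemma IsAlternating.comp_snoc {k : ℕ} {v : (Fin (k + 1) → V) → ℂ} (hv : IsAlternating v)
    (y : V) (x : Fin k → V) : v (Fin.snoc x y) = (-1) ^ k * v (Fin.cons y x) := by
  rw [← Fin.insertNth_last', hv.comp_insertNth, Fin.val_last]

lemma IsAlternating.sum_faces {k : ℕ} {f : (Fin k → V) → ℂ} (hf : IsAlternating f) :
    IsAlternating fun x : Fin (k + 1) → V =>
      ∑ j : Fin (k + 1), (-1 : ℂ) ^ (j : ℕ) * f (x ∘ j.succAbove) := by
  intro x σ
  rw [Finset.mul_sum, ← Equiv.sum_comp σ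
    (fun j => ((Equiv.Perm.sign σ : ℤ) : ℂ) * ((-1 : ℂ) ^ (j : ℕ) * f (x ∘ j.succAbove)))]
  refine Finset.sum_congr rfl fun j _ => ?_
  obtain ⟨τ, hτ, hsign⟩ := exists_perm_comp_succAbove σ j
  have hj : (-1 : ℂ) ^ (j : ℕ) * (-1) ^ (j : ℕ) = 1 := by
    rw [← mul_pow, neg_one_mul, neg_neg, one_pow]
  rw [comp_assoc, hτ, ← comp_assoc, hf, hsign]
  push_cast
  linear_combination ((-1) ^ (σ j : ℕ) * (Equiv.Perm.sign σ : ℤ) * f (x ∘ (σ j).succAbove)) * hj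

end Alternation

section Operators

variable {G : WG V} {n : ℕ}

lemma d_apply {i : ℕ} (f : (Fin (i + 1) → V) → ℂ) {x : Fin (i + 2) → V} (h : IsSimplex G x) :
    d G i f x = ∑ j : Fin (i + 2), (-1 : ℂ) ^ (j : ℕ) * f (x ∘ j.succAbove) := by
  simp [d, dOn, h]

lemma d_apply_of_not_isSimplex {i : ℕ} (f : (Fin (i + 1) → V) → ℂ) {x : Fin (i + 2) → V}
    (h : ¬ IsSimplex G x) : d G i f x = 0 := by
  simp [d, dOn, h]

lemma delta_apply (W : CliqueWeights G n) (i : ℕ) (g : (Fin (i + 2) → V) → ℂ)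
    (x : Fin (i + 1) → V) :
    delta G W i g x = (W.m i x : ℂ)⁻¹ *
      ∑' y : V, (W.m (i + 1) (Fin.snoc x y) : ℂ) * g (Fin.snoc x y) := by
  simp [delta, deltaOn]

lemma weight_mul_delta (W : CliqueWeights G n) {i : ℕ} (hi : i + 1 ≤ n)
    (g : (Fin (i + 2) → V) → ℂ) (x : Fin (i + 1) → V) :
    (W.m i x : ℂ) * delta G W i g x =
      ∑' y : V, (W.m (i + 1) (Fin.snoc x y) : ℂ) * g (Fin.snoc x y) := by
  rw [delta_apply]
  by_cases h : W.m i x = 0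
  · simp [h, weight_snoc_eq_zero W hi h]
  · rw [mul_inv_cancel_left₀ (Complex.ofReal_ne_zero.2 h)]

lemma isCochain_d {i : ℕ} {f : (Fin (i + 1) → V) → ℂ} (hf : IsCochain G i f) :
    IsCochain G (i + 1) (d G i f) := by
  refine ⟨fun x σ => ?_, fun x h => d_apply_of_not_isSimplex f h⟩
  by_cases h : IsSimplex G x
  · rw [d_apply f h, d_apply f ((isSimplex_comp_perm_iff σ).2 h)]
    exact hf.1.sum_faces x σ
  · rw [d_apply_of_not_isSimplex f h, mul_zero,
      d_apply_of_not_isSimplex f (mt (isSimplex_comp_perm_iff σ).1 h)]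

lemma isCochain_delta (W : CliqueWeights G n) {i : ℕ} (hi : i + 1 ≤ n)
    {g : (Fin (i + 2) → V) → ℂ} (hg : IsCochain G (i + 1) g) :
    IsCochain G i (delta G W i g) := by
  refine ⟨fun x σ => ?_, fun x h => ?_⟩
  · rw [delta_apply, delta_apply, weight_comp_perm W (by lia), mul_left_comm]
    congr 1
    rw [← tsum_mul_left]
    refine tsum_congr fun y => ?_
    rw [weight_snoc_comp_perm W hi, hg.1.comp_snoc, hg.1.comp_snoc, cons_comp_perm, hg.1,
      Equiv.Perm.decomposeFin.symm_sign, if_pos rfl, one_mul]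
    ring
  · rw [delta_apply, weight_eq_zero W (by lia) h, Complex.ofReal_zero, inv_zero, zero_mul]

lemma d_add (i : ℕ) (f g : (Fin (i + 1) → V) → ℂ) : d G i (f + g) = d G i f + d G i g := by
  funext x
  by_cases h : IsSimplex G x
  · simp [d_apply _ h, mul_add, Finset.sum_add_distrib]
  · simp [d_apply_of_not_isSimplex _ h]

lemma d_smul (i : ℕ) (c : ℂ) (f : (Fin (i + 1) → V) → ℂ) : d G i (c • f) = c • d G i f := by
  funext x
  by_cases h : IsSimplex G x
  · simp [d_apply _ h, Finset.mul_sum, mul_left_comm]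
  · simp [d_apply_of_not_isSimplex _ h]

lemma delta_add (W : CliqueWeights G n) {i : ℕ} (hi : i + 1 ≤ n)
    (f g : (Fin (i + 2) → V) → ℂ) :
    delta G W i (f + g) = delta G W i f + delta G W i g := by
  funext x
  simp only [delta_apply, Pi.add_apply, mul_add]
  rw [(summable_weight_snoc_mul_complex W hi x _).tsum_add
    (summable_weight_snoc_mul_complex W hi x _), mul_add]

lemma delta_smul (W : CliqueWeights G n) (i : ℕ) (c : ℂ) (f : (Fin (i + 2) → V) → ℂ) :
    delta G W i (c • f) = c • delta G W i f := by
  funext x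
  simp only [delta_apply, Pi.smul_apply, smul_eq_mul, mul_left_comm _ c, tsum_mul_left]

lemma delta_zero (W : CliqueWeights G n) (i : ℕ) :
    delta G W i (0 : (Fin (i + 2) → V) → ℂ) = 0 := by
  funext x
  simp [delta_apply]

lemma finite_support_delta (W : CliqueWeights G n) (i : ℕ) {g : (Fin (i + 2) → V) → ℂ}
    (hg : (support g).Finite) : (support (delta G W i g)).Finite := by
  refine (hg.image (· ∘ Fin.castSucc)).subset fun x hx => ?_
  by_contra hx'
  have hzero : ∀ y, g (Fin.snoc x y) = 0 := fun y => by_contra fun h =>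
    hx' ⟨Fin.snoc x y, h, snoc_comp_castSucc x y⟩
  exact hx (by simp [delta_apply, hzero])

lemma finite_support_d {i : ℕ} {f : (Fin (i + 1) → V) → ℂ}
    (hf : (support f).Finite) : (support (d G i f)).Finite := by
  have hfin : ∀ j : Fin (i + 2), (⋃ x ∈ support f,
      (fun y => (Fin.insertNth j y x : Fin (i + 2) → V)) '' {y | 0 < G.m₁ (x 0) y}).Finite :=
    fun j => hf.biUnion fun x _ => (G.locFin (x 0)).image _
  refine (Set.finite_iUnion hfin).subset fun τ hτ => ?_
  have hs : IsSimplex G τ := by_contra fun h => hτ (d_apply_of_not_isSimplex f h)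
  rw [mem_support, d_apply _ hs] at hτ
  obtain ⟨j, -, hj⟩ := Finset.exists_ne_zero_of_sum_ne_zero hτ
  refine mem_iUnion.2 ⟨j, mem_iUnion₂.2 ⟨τ ∘ j.succAbove, right_ne_zero_of_mul hj, τ j, ?_, ?_⟩⟩
  · exact hs.2 _ _ (Fin.succAbove_ne j 0)
  · exact Fin.insertNth_self_removeNth j τ

end Operators

/-! ### Green's formula and its consequences -/

section Faces

/-- A tuple of length `k + 1` as its face opposite to position `j` together with its `j`-th
entry. -/
def faceEquiv (V : Type*) {k : ℕ} (j : Fin (k + 1)) : (Fin k → V) × V ≃ (Fin (k + 1) → V) :=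
  (Equiv.prodComm _ _).trans (Fin.insertNthEquiv (fun _ => V) j)

lemma faceEquiv_apply {k : ℕ} (j : Fin (k + 1)) (p : (Fin k → V) × V) :
    faceEquiv V j p = Fin.insertNth j p.2 p.1 := rfl

lemma hasSum_sum_faces {E : Type*} [NormedAddCommGroup E] [CompleteSpace E] {k : ℕ}
    {F : Fin (k + 1) → (Fin (k + 1) → V) → E} {H : (Fin k → V) → V → E}
    (hFH : ∀ j x y, F j (Fin.insertNth j y x) = H x y) (hH : Summable (uncurry H)) :
    HasSum (fun τ => ∑ j, F j τ) ((k + 1) • ∑' x, ∑' y, H x y) := by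
  have htotal : ∑' p, uncurry H p = ∑' x, ∑' y, H x y := hH.tsum_prod
  have hface : ∀ j, HasSum (F j) (∑' x, ∑' y, H x y) := fun j => by
    rw [← (faceEquiv V j).hasSum_iff, ← htotal]
    exact hH.hasSum.congr_fun fun p => hFH j p.1 p.2
  simpa using hasSum_sum (s := Finset.univ) fun j _ => hface j

lemma snoc_snoc_swap {k : ℕ} (x : Fin k → V) (y z : V) :
    (Fin.snoc (Fin.snoc x z : Fin (k + 1) → V) y : Fin (k + 2) → V) =
      (Fin.snoc (Fin.snoc x y : Fin (k + 1) → V) z : Fin (k + 2) → V) ∘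
        Equiv.swap (Fin.last (k + 1)) (Fin.castSucc (Fin.last k)) := by
  funext a
  refine Fin.lastCases ?_ (fun b => Fin.lastCases ?_ (fun c => ?_) b) a
  · simp
  · simp
  · rw [comp_apply, Equiv.swap_apply_of_ne_of_ne (Fin.castSucc_ne_last _)
      (by simp [Fin.ext_iff, c.2.ne])]
    simp

lemma tsum_tsum_eq_zero_of_antisymm {X : Type*} {h : X → X → ℂ}
    (hsum : Summable (uncurry h)) (hanti : ∀ y z, h z y = -h y z) :
    ∑' y, ∑' z, h y z = 0 := by
  have hneg : ∑' z, ∑' y, h y z = -∑' y, ∑' z, h y z := by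
    simp only [← tsum_neg, ← hanti]
  exact self_eq_neg.1 ((hsum.tsum_comm).symm.trans hneg)

end Faces

section Green

open ComplexConjugate

variable {G : WG V} {n : ℕ}

/-- The constant in Green's formula for the unnormalised inner products: `delta` extends a simplex
at its last position, whence the sign, and `d` has `i + 2` faces to sum over. -/
noncomputable def greenConst (i : ℕ) : ℝ := (-1) ^ (i + 1) * (i + 2)

lemma abs_greenConst (i : ℕ) : |greenConst i| = i + 2 := by
  rw [greenConst, abs_mul, abs_neg_one_pow, one_mul, abs_of_nonneg (by positivity)]

lemma greenConst_ne_zero (i : ℕ) : (greenConst i : ℂ) ≠ 0 := by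
  have habs : 0 < |greenConst i| := abs_greenConst i ▸ by positivity
  exact_mod_cast abs_pos.1 habs

lemma green_of_summable (W : CliqueWeights G n) {i : ℕ} (hi : i + 1 ≤ n)
    (g : (Fin (i + 1) → V) → ℂ) {v : (Fin (i + 2) → V) → ℂ} (hv : IsAlternating v)
    (hs : Summable fun p : (Fin (i + 1) → V) × V =>
      (W.m (i + 1) (Fin.snoc p.1 p.2) : ℂ) * g p.1 * conj (v (Fin.snoc p.1 p.2))) :
    wip (W.m (i + 1)) (d G i g) v = greenConst i * wip (W.m i) g (delta G W i v) := by
  set F : Fin (i + 2) → (Fin (i + 2) → V) → ℂ := fun j τ =>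
    (-1) ^ (j : ℕ) * (W.m (i + 1) τ * g (τ ∘ j.succAbove) * conj (v τ)) with hF
  set H : (Fin (i + 1) → V) → V → ℂ := fun x y =>
    W.m (i + 1) (Fin.snoc x y) * g x * conj (v (Fin.snoc x y)) with hH
  have hsign : ∀ j : ℕ, (-1 : ℂ) ^ j * (-1) ^ j = 1 := fun j => by simp [← mul_pow]
  have hd : wip (W.m (i + 1)) (d G i g) v = ∑' τ, ∑ j, F j τ := by
    refine tsum_congr fun τ => ?_
    by_cases h : IsSimplex G τ
    · rw [d_apply _ h, Finset.mul_sum, Finset.sum_mul]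
      exact Finset.sum_congr rfl fun j _ => by ring
    · simp [hF, weight_eq_zero W hi h]
  have hδ : wip (W.m i) g (delta G W i v) = ∑' x, ∑' y, H x y := by
    refine tsum_congr fun x => ?_
    rw [mul_right_comm, mul_comm _ (g x), ← Complex.conj_ofReal (W.m i x), ← map_mul,
      weight_mul_delta W hi, Complex.conj_tsum, ← tsum_mul_left]
    refine tsum_congr fun y => ?_
    rw [map_mul, Complex.conj_ofReal]
    ring
  have hface : ∀ j x y, F j (Fin.insertNth j y x) = (-1) ^ (i + 1) * H x y := by
    intro j x y
    simp only [hF, hH]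
    rw [insertNth_comp_succAbove, weight_insertNth W hi, hv.comp_insertNth, hv.comp_snoc]
    simp only [map_mul, map_pow, map_neg, map_one]
    linear_combination (W.m (i + 1) (Fin.snoc x y) * g x * conj (v (Fin.cons y x))) *
      (hsign j - hsign (i + 1))
  rw [hd, hδ, (hasSum_sum_faces hface (hs.mul_left _)).tsum_eq]
  simp only [tsum_mul_left, greenConst, nsmul_eq_mul]
  push_cast
  ring

lemma green_left (W : CliqueWeights G n) {i : ℕ} (hi : i + 1 ≤ n)
    {g : (Fin (i + 1) → V) → ℂ} (hg : (support g).Finite)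
    {v : (Fin (i + 2) → V) → ℂ} (hv : IsAlternating v) :
    wip (W.m (i + 1)) (d G i g) v = greenConst i * wip (W.m i) g (delta G W i v) := by
  have hfin : (⋃ x ∈ support g,
      (fun y => (x, y)) '' {y | W.m (i + 1) (Fin.snoc x y) ≠ 0}).Finite :=
    hg.biUnion fun x _ => (finite_weight_snoc_ne_zero W hi x).image _
  refine green_of_summable W hi g hv (summable_of_hasFiniteSupport (hfin.subset fun p hp => ?_))
  have hmg := left_ne_zero_of_mul hp
  exact mem_iUnion₂.2 ⟨p.1, right_ne_zero_of_mul hmg, p.2,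
    Complex.ofReal_ne_zero.1 (left_ne_zero_of_mul hmg), rfl⟩

lemma green_right (W : CliqueWeights G n) {i : ℕ} (hi : i + 1 ≤ n)
    (g : (Fin (i + 1) → V) → ℂ)
    {v : (Fin (i + 2) → V) → ℂ} (hv : IsAlternating v) (hfin : (support v).Finite) :
    wip (W.m (i + 1)) (d G i g) v = greenConst i * wip (W.m i) g (delta G W i v) := by
  refine green_of_summable W hi g hv (summable_of_hasFiniteSupport <|
    (hfin.image (faceEquiv V (Fin.last (i + 1))).symm).subset fun p hp =>
      ⟨Fin.snoc p.1 p.2, fun h0 => right_ne_zero_of_mul hp (by rw [h0, map_zero]), ?_⟩)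
  rw [Equiv.symm_apply_eq, faceEquiv_apply, Fin.insertNth_last']

/-- Test `h` against its restriction to the finitely many tuples with a given vertex set. -/
lemma eq_zero_of_forall_wip_eq_zero (W : CliqueWeights G n) {i : ℕ} (hi : i ≤ n)
    {h : (Fin (i + 1) → V) → ℂ} (hh : IsCochain G i h)
    (H : ∀ φ, IsCochain G i φ → (support φ).Finite → wip (W.m i) h φ = 0) : h = 0 := by
  classical
  funext x
  by_cases hx : IsSimplex G x
  swap
  · exact hh.2 x hx
  set φ : (Fin (i + 1) → V) → ℂ := fun y => if range y = range x then h y else 0 with hφ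
  have hφc : IsCochain G i φ := by
    refine ⟨fun y σ => ?_, fun y hy => ?_⟩
    · simp only [hφ, EquivLike.range_comp, hh.1 y σ, mul_ite, mul_zero]
    · simp [hφ, hh.2 y hy]
  have hfin : (support φ).Finite :=
    (Set.Finite.pi' fun _ : Fin (i + 1) => finite_range x).subset fun y hy a =>
      (of_not_not fun hne => hy (if_neg hne) : range y = range x) ▸ mem_range_self a
  have hself : wip (W.m i) h φ = wip (W.m i) φ φ := by
    refine tsum_congr fun y => ?_
    by_cases hy : range y = range x <;> simp [hφ, hy]
  have hnorm : wnormSq (W.m i) φ = 0 := by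
    rw [← Complex.ofReal_eq_zero, ← wip_self, ← hself, H φ hφc hfin]
  simpa [hφ] using eq_zero_of_wnormSq_eq_zero (W.nonneg i)
    (MemWL2.of_finite_support _ hfin) hnorm ((weight_pos_iff W hi x).2 hx)

lemma delta_delta (W : CliqueWeights G n) {i : ℕ} (hi : i + 2 ≤ n)
    {v : (Fin (i + 3) → V) → ℂ} (hv : IsAlternating v) :
    delta G W i (delta G W (i + 1) v) = 0 := by
  funext x
  set h : V → V → ℂ := fun y z =>
    (W.m (i + 2) (Fin.snoc (Fin.snoc x y : Fin (i + 2) → V) z) : ℂ) *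
      v (Fin.snoc (Fin.snoc x y : Fin (i + 2) → V) z) with hh
  have hanti : ∀ y z, h z y = -h y z := by
    intro y z
    simp only [hh, snoc_snoc_swap x y z, weight_comp_perm W hi]
    rw [hv, Equiv.Perm.sign_swap (Fin.castSucc_ne_last _).symm]
    simp
  have hsupp : (support (uncurry h)).Finite := by
    refine ((G.locFin (x 0)).prod (G.locFin (x 0))).subset fun p hp => ?_
    have hs : IsSimplex G (Fin.snoc (Fin.snoc x p.1 : Fin (i + 2) → V) p.2) :=
      by_contra fun hns => hp (by simp [uncurry, hh, weight_eq_zero W hi hns])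
    refine ⟨hs.of_snoc.adj_of_snoc, ?_⟩
    have hadj := hs.adj_of_snoc
    rwa [← Fin.castSucc_zero, Fin.snoc_castSucc] at hadj
  rw [delta_apply, Pi.zero_apply]
  simp_rw [weight_mul_delta W hi]
  rw [tsum_tsum_eq_zero_of_antisymm (summable_of_hasFiniteSupport hsupp) hanti, mul_zero]

/-- By duality from `delta_delta`. -/
lemma d_d (W : CliqueWeights G n) {i : ℕ} (hi : i + 2 ≤ n)
    {f : (Fin (i + 1) → V) → ℂ} (hf : IsCochain G i f) :
    d G (i + 1) (d G i f) = 0 := by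
  refine eq_zero_of_forall_wip_eq_zero W hi (isCochain_d (isCochain_d hf)) fun φ hφ hfin => ?_
  rw [green_right W hi _ hφ.1 hfin, green_right W (by lia) _ (isCochain_delta W hi hφ).1
    (finite_support_delta W _ hfin), delta_delta W hi hφ.1, wip_zero_right, mul_zero, mul_zero]

end Green

section Laplacians

variable {G : WG V} {n : ℕ}

/-- The part `δ_{i+1} d_{i+1}` of the Hodge Laplacian in degree `i`, absent for `i = n`. -/
noncomputable def upLaplacian (W : CliqueWeights G n) (i : ℕ) (u : (Fin (i + 1) → V) → ℂ) :
    (Fin (i + 1) → V) → ℂ :=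
  if i + 1 ≤ n then delta G W i (d G i u) else 0

/-- The part `d_i δ_i` of the Hodge Laplacian in degree `i`, absent for `i = 0`. -/
noncomputable def downLaplacian (W : CliqueWeights G n) :
    ∀ i : ℕ, ((Fin (i + 1) → V) → ℂ) → (Fin (i + 1) → V) → ℂ
  | 0, _ => 0
  | i + 1, u => d G i (delta G W i u)

lemma Lblock_eq_add (W : CliqueWeights G n) (i : ℕ) (u : (Fin (i + 1) → V) → ℂ) :
    Lblock G W i u = upLaplacian W i u + downLaplacian W i u := by
  cases i with
  | zero => simp [Lblock, upLaplacian, downLaplacian]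
  | succ i =>
    funext x
    by_cases h : i + 2 ≤ n <;> simp [Lblock, upLaplacian, downLaplacian, h]

lemma Dop_succ (W : CliqueWeights G n) {i : ℕ} (hi : i + 1 ≤ n)
    (u : ∀ i : ℕ, (Fin (i + 1) → V) → ℂ) :
    Dop G W u (i + 1) = d G i (u i) + delta G W (i + 1) (u (i + 2)) := by
  simp only [Dop, hi, if_true]
  rfl

lemma Dop_eq_zero (W : CliqueWeights G n) {i : ℕ} (hi : n < i)
    (u : ∀ i : ℕ, (Fin (i + 1) → V) → ℂ) : Dop G W u i = 0 := by
  obtain ⟨i, rfl⟩ := Nat.exists_eq_succ_of_ne_zero (Nat.ne_zero_of_lt hi)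
  simp only [Dop, if_neg hi.not_ge]

lemma delta_Dop (W : CliqueWeights G n) {u : ∀ i : ℕ, (Fin (i + 1) → V) → ℂ}
    (hu : CochainFamily G n u) (i : ℕ) :
    delta G W i (Dop G W u (i + 1)) = upLaplacian W i (u i) := by
  rw [upLaplacian]
  split_ifs with hi
  · have hδδ : delta G W i (delta G W (i + 1) (u (i + 2))) = 0 := by
      rcases Nat.lt_or_ge n (i + 2) with h | h
      · rw [hu.2 _ h, delta_zero, delta_zero]
      · exact delta_delta W h (hu.1 _).1
    rw [Dop_succ W hi, delta_add W hi, hδδ, add_zero]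
  · rw [Dop_eq_zero W (not_le.1 hi), delta_zero]

lemma d_Dop (W : CliqueWeights G n) {u : ∀ i : ℕ, (Fin (i + 1) → V) → ℂ}
    (hu : CochainFamily G n u) {i : ℕ} (hi : i + 1 ≤ n) :
    d G i (Dop G W u i) = d G i (delta G W i (u (i + 1))) := by
  cases i with
  | zero => rfl
  | succ i => rw [Dop_succ W (by lia), d_add, d_d W hi (hu.1 i), zero_add]

/-- `D²` is block diagonal because `d² = 0` and `δ² = 0`. -/
lemma Dop_Dop (W : CliqueWeights G n) {u : ∀ i : ℕ, (Fin (i + 1) → V) → ℂ}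
    (hu : CochainFamily G n u) {i : ℕ} (hi : i ≤ n) :
    Dop G W (Dop G W u) i = Lblock G W i (u i) := by
  rw [Lblock_eq_add]
  cases i with
  | zero => exact (delta_Dop W hu 0).trans (add_zero _).symm
  | succ i =>
    rw [Dop_succ W hi, d_Dop W hu hi, delta_Dop W hu (i + 1)]
    exact add_comm _ _

end Laplacians

/-! ### Cut-off functions -/

section Oscillation

/-- The oscillation of a vertex function along a tuple of vertices, a permutation invariant
substitute for the squared gradient. -/
noncomputable def osc (χ : V → ℝ) {k : ℕ} (τ : Fin k → V) : ℝ :=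
  ∑ a, ∑ b, (χ (τ a) - χ (τ b)) ^ 2

lemma osc_nonneg (χ : V → ℝ) {k : ℕ} (τ : Fin k → V) : 0 ≤ osc χ τ :=
  Finset.sum_nonneg fun _ _ => Finset.sum_nonneg fun _ _ => sq_nonneg _

lemma osc_comp_perm (χ : V → ℝ) {k : ℕ} (τ : Fin k → V) (σ : Equiv.Perm (Fin k)) :
    osc χ (τ ∘ σ) = osc χ τ := by
  simp only [osc, comp_apply]
  rw [Equiv.sum_comp σ fun a => ∑ b, (χ (τ a) - χ (τ (σ b))) ^ 2]
  exact Finset.sum_congr rfl fun a _ => Equiv.sum_comp σ fun b => (χ (τ a) - χ (τ b)) ^ 2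

lemma sub_sq_le_osc (χ : V → ℝ) {k : ℕ} (τ : Fin k → V) (a b : Fin k) :
    (χ (τ a) - χ (τ b)) ^ 2 ≤ osc χ τ :=
  (Finset.single_le_sum (f := fun b => (χ (τ a) - χ (τ b)) ^ 2) (fun _ _ => sq_nonneg _)
    (Finset.mem_univ b)).trans
  (Finset.single_le_sum (f := fun a => ∑ b, (χ (τ a) - χ (τ b)) ^ 2)
    (fun _ _ => Finset.sum_nonneg fun _ _ => sq_nonneg _) (Finset.mem_univ a))

lemma osc_le_sum_sub_sq (χ : V → ℝ) {k : ℕ} (τ : Fin k → V) (c : ℝ) :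
    osc χ τ ≤ 4 * k * ∑ a, (χ (τ a) - c) ^ 2 := by
  calc osc χ τ
      ≤ ∑ a, ∑ b, (2 * (χ (τ a) - c) ^ 2 + 2 * (χ (τ b) - c) ^ 2) :=
        Finset.sum_le_sum fun a _ => Finset.sum_le_sum fun b _ => by
          nlinarith [sq_nonneg ((χ (τ a) - c) + (χ (τ b) - c))]
    _ = 4 * k * ∑ a, (χ (τ a) - c) ^ 2 := by
        simp only [Finset.sum_add_distrib, Finset.sum_const, Finset.card_univ, Fintype.card_fin,
          nsmul_eq_mul, ← Finset.mul_sum]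
        ring

lemma osc_snoc_le (χ : V → ℝ) {k : ℕ} (x : Fin k → V) (y : V) :
    osc χ (Fin.snoc x y : Fin (k + 1) → V) ≤ 4 * (k + 1) * ∑ b, (χ (x b) - χ y) ^ 2 := by
  simpa [Fin.sum_univ_castSucc] using
    osc_le_sum_sub_sq χ (Fin.snoc x y : Fin (k + 1) → V) (χ y)

lemma osc_le_of_mem_Icc {χ : V → ℝ} (hχ : ∀ v, χ v ∈ Icc (0 : ℝ) 1) {k : ℕ} (τ : Fin k → V) :
    osc χ τ ≤ k ^ 2 := by
  have hcenter : ∀ a, (χ (τ a) - 1 / 2) ^ 2 ≤ 1 / 4 := fun a => by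
    nlinarith [(hχ (τ a)).1, (hχ (τ a)).2]
  calc osc χ τ ≤ 4 * k * ∑ a, (χ (τ a) - 1 / 2) ^ 2 := osc_le_sum_sub_sq χ τ _
    _ ≤ 4 * k * ∑ _a : Fin k, 1 / 4 := by gcongr with a; exact hcenter a
    _ = k ^ 2 := by simp; ring

/-- Truncation of a function to values in `[0, 1]`. -/
noncomputable def clamp (χ : V → ℝ) (v : V) : ℝ := max 0 (min 1 (χ v))

lemma clamp_mem_Icc (χ : V → ℝ) (v : V) : clamp χ v ∈ Icc (0 : ℝ) 1 :=
  ⟨le_max_left _ _, max_le zero_le_one (min_le_left _ _)⟩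

lemma osc_clamp_le (χ : V → ℝ) {k : ℕ} (τ : Fin k → V) : osc (clamp χ) τ ≤ osc χ τ := by
  refine Finset.sum_le_sum fun a _ => Finset.sum_le_sum fun b _ => sq_le_sq.2 ?_
  calc |clamp χ (τ a) - clamp χ (τ b)| ≤ |min 1 (χ (τ a)) - min 1 (χ (τ b))| := by
        simpa [clamp] using abs_max_sub_max_le_max 0 (min 1 (χ (τ a))) 0 (min 1 (χ (τ b)))
    _ ≤ |χ (τ a) - χ (τ b)| := by
        simpa using abs_min_sub_min_le_max 1 (χ (τ a)) 1 (χ (τ b))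

end Oscillation

section AlternatingSums

/-- The alternating sum of the values of `f`; up to a factor it is the coboundary of an averaged
function. -/
def altSum {k : ℕ} (f : Fin k → ℝ) : ℝ := ∑ a : Fin k, (-1) ^ (a : ℕ) * f a

lemma altSum_comp_snoc (χ : V → ℝ) {j : ℕ} (hj : Even j) (x : Fin (j + 1) → V) (y : V) :
    altSum (χ ∘ (Fin.snoc x y : Fin (j + 2) → V)) = altSum (χ ∘ x) - χ y := by
  simp [altSum, Fin.sum_univ_castSucc, hj.add_one.neg_one_pow, sub_eq_add_neg]

/-- Negation in `Fin (j + 1)` fixes `0` and flips the parity of every other index. -/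
lemma altSum_add_altSum_comp_neg {j : ℕ} (hj : Even j) (f : Fin (j + 1) → ℝ) :
    altSum f + altSum (f ∘ Equiv.neg (Fin (j + 1))) = 2 * f 0 := by
  have hreindex : altSum (f ∘ Equiv.neg (Fin (j + 1))) =
      ∑ a : Fin (j + 1), (-1) ^ ((-a : Fin (j + 1)) : ℕ) * f a := by
    rw [altSum, ← Equiv.sum_comp (Equiv.neg (Fin (j + 1)))]
    simp
  have hcancel : ∀ b : Fin j, (-1 : ℝ) ^ ((-b.succ : Fin (j + 1)) : ℕ) = -(-1) ^ (b.succ : ℕ) := by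
    intro b
    have hval : ((-b.succ : Fin (j + 1)) : ℕ) + b.succ = j + 1 := by
      have hne : ¬ b.succ = 0 := Fin.succ_ne_zero b
      have := b.succ.isLt
      rw [Fin.val_neg, if_neg hne]
      lia
    have hprod : (-1 : ℝ) ^ ((-b.succ : Fin (j + 1)) : ℕ) * (-1) ^ (b.succ : ℕ) = -1 := by
      rw [← pow_add, hval, hj.add_one.neg_one_pow]
    rcases neg_one_pow_eq_or ℝ (b.succ : ℕ) with h | h <;> rw [h] at hprod ⊢ <;> linarith
  rw [hreindex, altSum, Fin.sum_univ_succ, Fin.sum_univ_succ]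
  simp only [hcancel, neg_mul, Finset.sum_neg_distrib]
  simp
  ring

lemma sum_neg_one_pow_mul_avg (χ : V → ℝ) {j : ℕ} (hj : Even j) (τ : Fin (j + 2) → V) :
    ∑ a : Fin (j + 2), (-1 : ℂ) ^ (a : ℕ) * avg χ (τ ∘ a.succAbove) =
      -((j + 1 : ℂ)⁻¹ * (altSum (χ ∘ τ) : ℂ)) := by
  have hface : ∀ a : Fin (j + 2), avg χ (τ ∘ a.succAbove) =
      (j + 1 : ℂ)⁻¹ * ((∑ b, (χ (τ b) : ℂ)) - χ (τ a)) := fun a => by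
    rw [avg, Fin.sum_univ_succAbove (fun b => (χ (τ b) : ℂ)) a, add_sub_cancel_left]
    push_cast
    rfl
  have hsigns : ∑ a : Fin (j + 2), (-1 : ℂ) ^ (a : ℕ) = 0 := by
    rw [Fin.sum_univ_eq_sum_range (fun a => (-1 : ℂ) ^ a), neg_one_geom_sum,
      if_pos (hj.add even_two)]
  simp only [hface, mul_left_comm _ (j + 1 : ℂ)⁻¹, mul_sub, Finset.sum_sub_distrib,
    ← Finset.mul_sum, ← Finset.sum_mul, hsigns]
  simp [altSum]

end AlternatingSums

section Energy

variable {G : WG V} {n : ℕ}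

/-- The weighted sum of `ρ` over the cofaces of a simplex. -/
noncomputable def cofaceSum (W : CliqueWeights G n) {i : ℕ} (ρ : (Fin (i + 2) → V) → ℝ)
    (x : Fin (i + 1) → V) : ℝ :=
  ∑' y, W.m (i + 1) (Fin.snoc x y) * ρ (Fin.snoc x y)

lemma tsum_weight_mul_norm_d_avg_sq_le (W : CliqueWeights G n) {χ : V → ℝ} {C : ℝ} {j : ℕ}
    (hj : j + 1 ≤ n) (hE : ∀ x, IsSimplex G x → gradEnergyOn W univ j χ x ≤ C)
    (x : Fin (j + 1) → V) :
    ∑' y, W.m (j + 1) (Fin.snoc x y) * ‖d G j (fun σ => avg χ σ) (Fin.snoc x y)‖ ^ 2 ≤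
      C * W.m j x := by
  by_cases hx : IsSimplex G x
  · rw [mul_comm C, ← inv_mul_le_iff₀ ((weight_pos_iff W (by lia) x).2 hx)]
    simpa [gradEnergyOn, d] using hE x hx
  · have hm := weight_eq_zero W (by lia : j ≤ n) hx
    simp [hm, weight_snoc_eq_zero W hj hm]

lemma tsum_weight_mul_altSum_sq_le (W : CliqueWeights G n) {χ : V → ℝ} {C : ℝ} {j : ℕ}
    (hj : j + 1 ≤ n) (heven : Even j) (hE : ∀ x, IsSimplex G x → gradEnergyOn W univ j χ x ≤ C)
    (x : Fin (j + 1) → V) :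
    ∑' y, W.m (j + 1) (Fin.snoc x y) * altSum (χ ∘ (Fin.snoc x y : Fin (j + 2) → V)) ^ 2 ≤
      (j + 1) ^ 2 * C * W.m j x := by
  calc ∑' y, W.m (j + 1) (Fin.snoc x y) * altSum (χ ∘ (Fin.snoc x y : Fin (j + 2) → V)) ^ 2
      = (j + 1) ^ 2 * ∑' y, W.m (j + 1) (Fin.snoc x y) *
          ‖d G j (fun σ => avg χ σ) (Fin.snoc x y)‖ ^ 2 := by
        rw [← tsum_mul_left]
        refine tsum_congr fun y => ?_
        by_cases hs : IsSimplex G (Fin.snoc x y : Fin (j + 2) → V)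
        · have hnorm : ‖(j + 1 : ℂ)‖ = j + 1 := by exact_mod_cast Complex.norm_natCast (j + 1)
          rw [d_apply _ hs, sum_neg_one_pow_mul_avg χ heven, norm_neg, norm_mul, norm_inv, hnorm,
            Complex.norm_real, mul_pow, Real.norm_eq_abs, sq_abs]
          field_simp
        · simp [weight_eq_zero W hj hs]
    _ ≤ (j + 1) ^ 2 * (C * W.m j x) := by
        gcongr
        exact tsum_weight_mul_norm_d_avg_sq_le W hj hE x
    _ = (j + 1) ^ 2 * C * W.m j x := by ring

lemma tsum_weight_mul_sub_zero_sq_le (W : CliqueWeights G n) {χ : V → ℝ} {C : ℝ} {j : ℕ}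
    (hj : j + 1 ≤ n) (heven : Even j) (hE : ∀ x, IsSimplex G x → gradEnergyOn W univ j χ x ≤ C)
    (x : Fin (j + 1) → V) :
    ∑' y, W.m (j + 1) (Fin.snoc x y) * (χ (x 0) - χ y) ^ 2 ≤ (j + 1) ^ 2 * C * W.m j x := by
  set x' : Fin (j + 1) → V := x ∘ Equiv.neg (Fin (j + 1)) with hx'
  set A : V → ℝ := fun y => altSum (χ ∘ (Fin.snoc x y : Fin (j + 2) → V)) with hA
  set A' : V → ℝ := fun y => altSum (χ ∘ (Fin.snoc x' y : Fin (j + 2) → V)) with hA'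
  have hsum : ∀ y, A y + A' y = 2 * (χ (x 0) - χ y) := fun y => by
    have h := altSum_add_altSum_comp_neg heven (χ ∘ x)
    simp only [hA, hA', altSum_comp_snoc χ heven, hx', ← comp_assoc]
    simp only [comp_apply] at h
    linarith
  have hle : ∑' y, W.m (j + 1) (Fin.snoc x y) * A y ^ 2 ≤ (j + 1) ^ 2 * C * W.m j x :=
    tsum_weight_mul_altSum_sq_le W hj heven hE x
  have hle' : ∑' y, W.m (j + 1) (Fin.snoc x y) * A' y ^ 2 ≤ (j + 1) ^ 2 * C * W.m j x := by
    simpa only [hx', weight_snoc_comp_perm W hj, weight_comp_perm W (by lia : j ≤ n)] using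
      tsum_weight_mul_altSum_sq_le W hj heven hE x'
  have hs := summable_weight_snoc_mul W hj x
  calc ∑' y, W.m (j + 1) (Fin.snoc x y) * (χ (x 0) - χ y) ^ 2
      ≤ ∑' y, (1 / 2) * (W.m (j + 1) (Fin.snoc x y) * A y ^ 2 +
          W.m (j + 1) (Fin.snoc x y) * A' y ^ 2) := by
        refine (hs _).tsum_le_tsum (fun y => ?_) (((hs _).add (hs _)).mul_left _)
        have hsq : (χ (x 0) - χ y) ^ 2 ≤ 1 / 2 * (A y ^ 2 + A' y ^ 2) := by
          have hhalf : χ (x 0) - χ y = (A y + A' y) / 2 := by linarith [hsum y]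
          rw [hhalf]
          nlinarith [sq_nonneg (A y - A' y)]
        nlinarith [mul_le_mul_of_nonneg_left hsq (W.nonneg (j + 1) (Fin.snoc x y))]
    _ ≤ (j + 1) ^ 2 * C * W.m j x := by
        rw [tsum_mul_left, (hs _).tsum_add (hs _)]
        linarith

lemma tsum_weight_mul_sub_sq_le (W : CliqueWeights G n) {χ : V → ℝ} {C : ℝ} {j : ℕ}
    (hj : j + 1 ≤ n) (heven : Even j) (hE : ∀ x, IsSimplex G x → gradEnergyOn W univ j χ x ≤ C)
    (x : Fin (j + 1) → V) (b : Fin (j + 1)) :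
    ∑' y, W.m (j + 1) (Fin.snoc x y) * (χ (x b) - χ y) ^ 2 ≤ (j + 1) ^ 2 * C * W.m j x := by
  simpa only [weight_snoc_comp_perm W hj, weight_comp_perm W (by lia : j ≤ n), comp_apply,
    Equiv.swap_apply_left] using tsum_weight_mul_sub_zero_sq_le W hj heven hE (x ∘ Equiv.swap 0 b)

lemma cofaceSum_osc_le_of_even (W : CliqueWeights G n) {χ : V → ℝ} {C : ℝ} {j : ℕ}
    (hj : j + 1 ≤ n) (heven : Even j) (hE : ∀ x, IsSimplex G x → gradEnergyOn W univ j χ x ≤ C)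
    (x : Fin (j + 1) → V) :
    cofaceSum W (osc χ) x ≤ 4 * (j + 2) * (j + 1) ^ 3 * C * W.m j x := by
  have hs := summable_weight_snoc_mul W hj x
  calc cofaceSum W (osc χ) x
      ≤ ∑' y, ∑ b, 4 * (j + 2) * (W.m (j + 1) (Fin.snoc x y) * (χ (x b) - χ y) ^ 2) := by
        refine (hs _).tsum_le_tsum (fun y => ?_) (summable_sum fun b _ => (hs _).mul_left _)
        rw [← Finset.mul_sum, ← Finset.mul_sum, mul_left_comm]
        refine mul_le_mul_of_nonneg_left ((osc_snoc_le χ x y).trans_eq ?_) (W.nonneg _ _)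
        push_cast
        ring
    _ = ∑ b, 4 * (j + 2) * ∑' y, W.m (j + 1) (Fin.snoc x y) * (χ (x b) - χ y) ^ 2 := by
        rw [Summable.tsum_finsetSum fun b _ => (hs _).mul_left _]
        simp only [tsum_mul_left]
    _ ≤ ∑ _b : Fin (j + 1), 4 * (j + 2) * ((j + 1) ^ 2 * C * W.m j x) := by
        gcongr with b
        exact tsum_weight_mul_sub_sq_le W hj heven hE x b
    _ = 4 * (j + 2) * (j + 1) ^ 3 * C * W.m j x := by
        simp
        ring

/-- For odd `j` the alternating sum of the `j + 2` signs is `1`, so the coboundary of the averaged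
cut-off equals `1` wherever its averages are `1`: the energy bound is a bound on the weights. -/
lemma tsum_weight_le_of_odd (W : CliqueWeights G n) {O : ℕ → Set V} {χ : ℕ → V → ℝ} {C : ℝ}
    (hO : ∀ v, ∀ᶠ k in atTop, v ∈ O k) {j : ℕ} (hj : j + 1 ≤ n) (hodd : Odd j)
    (havg : ∀ k, ∀ x : Fin (j + 1) → V, IsSimplex G x → (∀ a, x a ∈ O k) → avg (χ k) x = 1)
    (hE : ∀ k x, IsSimplex G x → gradEnergyOn W univ j (χ k) x ≤ C) (x : Fin (j + 1) → V) :
    ∑' y, W.m (j + 1) (Fin.snoc x y) ≤ C * W.m j x := by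
  have hx : ∀ᶠ k in atTop, ∀ a, x a ∈ O k := eventually_all.2 fun a => hO (x a)
  have hy : ∀ᶠ k in atTop, ∀ y ∈ {y | W.m (j + 1) (Fin.snoc x y) ≠ 0}, y ∈ O k :=
    (eventually_all_finite (finite_weight_snoc_ne_zero W hj x)).2 fun y _ => hO y
  obtain ⟨k, hxk, hyk⟩ := (hx.and hy).exists
  refine (tsum_congr fun y => ?_).trans_le (tsum_weight_mul_norm_d_avg_sq_le W hj (hE k) x)
  by_cases hm : W.m (j + 1) (Fin.snoc x y) = 0
  · rw [hm, zero_mul]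
  have hs : IsSimplex G (Fin.snoc x y : Fin (j + 2) → V) :=
    by_contra fun h => hm (weight_eq_zero W hj h)
  have hmem : ∀ a, (Fin.snoc x y : Fin (j + 2) → V) a ∈ O k :=
    Fin.lastCases (by simpa using hyk y hm) (by simpa using hxk)
  have hface : ∀ a : Fin (j + 2), avg (χ k) ((Fin.snoc x y : Fin (j + 2) → V) ∘ a.succAbove) = 1 :=
    fun a => havg k _ (hs.comp Fin.succAbove_right_injective) fun b => hmem _
  have hsigns : ∑ a : Fin (j + 2), (-1 : ℂ) ^ (a : ℕ) = 1 := by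
    rw [Fin.sum_univ_eq_sum_range (fun a => (-1 : ℂ) ^ a), neg_one_geom_sum,
      if_neg (Nat.not_even_iff_odd.2 (hodd.add_even even_two))]
  simp [d_apply _ hs, hface, hsigns]

end Energy

section Cutoffs

variable {G : WG V} {n : ℕ}

/-- A sequence of finitely supported functions with values in `[0, 1]`, eventually equal to `1`
at every vertex, whose oscillation energy is bounded by `C j` in degree `j`.  In odd degrees
the weights themselves are bounded. -/
structure IsCutoff (W : CliqueWeights G n) (χ : ℕ → V → ℝ) (C : ℕ → ℝ) : Prop where
  mem_Icc : ∀ k v, χ k v ∈ Icc (0 : ℝ) 1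
  finite_support : ∀ k, (support (χ k)).Finite
  eventually_one : ∀ v, ∀ᶠ k in atTop, χ k v = 1
  pos : ∀ j, 0 < C j
  energy_le : ∀ k j, j + 1 ≤ n → ∀ x : Fin (j + 1) → V,
    cofaceSum W (osc (χ k)) x ≤ C j * W.m j x
  weight_le : ∀ j, Odd j → j + 1 ≤ n → ∀ x : Fin (j + 1) → V,
    ∑' y, W.m (j + 1) (Fin.snoc x y) ≤ C j * W.m j x

lemma cofaceSum_osc_le_of_odd (W : CliqueWeights G n) {χ : V → ℝ}
    (hχ : ∀ v, χ v ∈ Icc (0 : ℝ) 1) {C : ℝ} {j : ℕ} (hj : j + 1 ≤ n) {x : Fin (j + 1) → V}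
    (hC : ∑' y, W.m (j + 1) (Fin.snoc x y) ≤ C * W.m j x) :
    cofaceSum W (osc χ) x ≤ (j + 2) ^ 2 * C * W.m j x := by
  calc cofaceSum W (osc χ) x
      ≤ ∑' y, W.m (j + 1) (Fin.snoc x y) * (j + 2 : ℝ) ^ 2 := by
        refine (summable_weight_snoc_mul W hj x _).tsum_le_tsum (fun y => ?_)
          (summable_weight_snoc_mul W hj x _)
        exact mul_le_mul_of_nonneg_left (by exact_mod_cast osc_le_of_mem_Icc hχ _) (W.nonneg _ _)
    _ ≤ (C * W.m j x) * (j + 2) ^ 2 := by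
        rw [tsum_mul_right]
        gcongr
    _ = (j + 2) ^ 2 * C * W.m j x := by ring

lemma cofaceSum_osc_clamp_le (W : CliqueWeights G n) {χ : V → ℝ} {C : ℝ} (hC : 0 < C)
    {j : ℕ} (hj : j + 1 ≤ n) (hE : ∀ x, IsSimplex G x → gradEnergyOn W univ j χ x ≤ C)
    (hodd : Odd j → ∀ x : Fin (j + 1) → V, ∑' y, W.m (j + 1) (Fin.snoc x y) ≤ C * W.m j x)
    (x : Fin (j + 1) → V) :
    cofaceSum W (osc (clamp χ)) x ≤ 4 * (j + 2) * (j + 1) ^ 3 * C * W.m j x := by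
  rcases Nat.even_or_odd j with h | h
  · refine le_trans ?_ (cofaceSum_osc_le_of_even W hj h hE x)
    exact (summable_weight_snoc_mul W hj x _).tsum_le_tsum
      (fun y => mul_le_mul_of_nonneg_left (osc_clamp_le χ _) (W.nonneg _ _))
      (summable_weight_snoc_mul W hj x _)
  · refine (cofaceSum_osc_le_of_odd W (clamp_mem_Icc χ) hj (hodd h x)).trans ?_
    have hj0 : (0 : ℝ) ≤ j := j.cast_nonneg
    have hpoly : ((j : ℝ) + 2) ^ 2 ≤ 4 * (j + 2) * (j + 1) ^ 3 := by
      nlinarith [mul_nonneg hj0 hj0, mul_nonneg (mul_nonneg hj0 hj0) hj0,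
        mul_nonneg (mul_nonneg (mul_nonneg hj0 hj0) hj0) hj0]
    have hm := W.nonneg j x
    gcongr

lemma exists_isCutoff {W : CliqueWeights G n} (h : GloballyChiComplete W) :
    ∃ χ C, IsCutoff W χ C := by
  obtain ⟨O, χ, -, hmono, -, hU, hsupp, havg, C, hC, hE⟩ := h
  have hO : ∀ v, ∀ᶠ k in atTop, v ∈ O k := fun v => by
    obtain ⟨k, hk⟩ := mem_iUnion.1 (hU ▸ mem_univ v)
    exact eventually_atTop.2 ⟨k, fun l hl => hmono hl hk⟩
  have hE' : ∀ k j, j + 1 ≤ n → ∀ x : Fin (j + 1) → V, IsSimplex G x →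
      gradEnergyOn W univ j (χ k) x ≤ C := fun k j hj x hx => hE k j hj x hx fun _ => mem_univ _
  have hodd : ∀ j, Odd j → j + 1 ≤ n → ∀ x : Fin (j + 1) → V,
      ∑' y, W.m (j + 1) (Fin.snoc x y) ≤ C * W.m j x := fun j ho hj =>
    tsum_weight_le_of_odd W hO hj ho
      (fun k x hx => havg k j (by lia) x hx fun _ => mem_univ _) fun k => hE' k j hj
  refine ⟨fun k => clamp (χ k), fun j => 4 * (j + 2) * (j + 1) ^ 3 * C,
    fun k => clamp_mem_Icc (χ k), fun k => ?_, fun v => ?_, fun j => by positivity,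
    fun k j hj => cofaceSum_osc_clamp_le W hC hj (hE' k j hj) fun ho => hodd j ho hj,
    fun j ho hj x => (hodd j ho hj x).trans ?_⟩
  · exact (hsupp k).subset fun v hv hv0 => hv (by simp [clamp, hv0])
  · filter_upwards [hO v] with k hk
    have hs : IsSimplex G (fun _ : Fin 1 => v) :=
      (weight_pos_iff W (Nat.zero_le n) _).1 (by rw [W.m_zero]; exact G.m₀_pos _)
    have hv : χ k v = 1 := by
      simpa [avg] using havg k 0 (Nat.zero_le n) (fun _ => v) hs (fun _ => mem_univ _) fun _ => hk
    simp [clamp, hv]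
  · have hone : (1 : ℝ) ≤ 4 * (j + 2) * (j + 1) ^ 3 := by
      have : (0 : ℝ) ≤ j := j.cast_nonneg
      nlinarith [one_le_pow₀ (by linarith : (1 : ℝ) ≤ j + 1) (n := 3)]
    exact mul_le_mul_of_nonneg_right (le_mul_of_one_le_left hC.le hone) (W.nonneg j x)

end Cutoffs

/-! ### Commutators with cut-off functions -/

section Faces

variable {G : WG V} {n : ℕ}

lemma cofaceSum_nonneg (W : CliqueWeights G n) {i : ℕ} {ρ : (Fin (i + 2) → V) → ℝ}
    (hρ : ∀ τ, 0 ≤ ρ τ) (x : Fin (i + 1) → V) : 0 ≤ cofaceSum W ρ x :=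
  tsum_nonneg fun _ => mul_nonneg (W.nonneg _ _) (hρ _)

lemma cofaceSum_mono (W : CliqueWeights G n) {i : ℕ} (hi : i + 1 ≤ n)
    {ρ ρ' : (Fin (i + 2) → V) → ℝ} {x : Fin (i + 1) → V}
    (h : ∀ y, ρ (Fin.snoc x y) ≤ ρ' (Fin.snoc x y)) : cofaceSum W ρ x ≤ cofaceSum W ρ' x :=
  (summable_weight_snoc_mul W hi x _).tsum_le_tsum
    (fun y => mul_le_mul_of_nonneg_left (h y) (W.nonneg _ _)) (summable_weight_snoc_mul W hi x _)

lemma sq_mul_cofaceSum_le {W : CliqueWeights G n} {i : ℕ} {ρ : (Fin (i + 2) → V) → ℝ} {C : ℝ}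
    (hC : ∀ x, cofaceSum W ρ x ≤ C * W.m i x) (u : (Fin (i + 1) → V) → ℂ) (x : Fin (i + 1) → V) :
    ‖u x‖ ^ 2 * cofaceSum W ρ x ≤ C * (W.m i x * ‖u x‖ ^ 2) :=
  (mul_le_mul_of_nonneg_left (hC x) (sq_nonneg _)).trans_eq (by ring)

lemma summable_sq_mul_cofaceSum {W : CliqueWeights G n} {i : ℕ} {ρ : (Fin (i + 2) → V) → ℝ}
    (hρ : ∀ τ, 0 ≤ ρ τ) {C : ℝ} (hC : ∀ x, cofaceSum W ρ x ≤ C * W.m i x)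
    {u : (Fin (i + 1) → V) → ℂ} (hu : MemWL2 (W.m i) u) :
    Summable fun x => ‖u x‖ ^ 2 * cofaceSum W ρ x :=
  (hu.mul_left C).of_nonneg_of_le
    (fun x => mul_nonneg (sq_nonneg _) (cofaceSum_nonneg W hρ x)) (sq_mul_cofaceSum_le hC u)

lemma tsum_sq_mul_cofaceSum_le {W : CliqueWeights G n} {i : ℕ} {ρ : (Fin (i + 2) → V) → ℝ}
    (hρ : ∀ τ, 0 ≤ ρ τ) {C : ℝ} (hC : ∀ x, cofaceSum W ρ x ≤ C * W.m i x)
    {u : (Fin (i + 1) → V) → ℂ} (hu : MemWL2 (W.m i) u) :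
    ∑' x, ‖u x‖ ^ 2 * cofaceSum W ρ x ≤ C * wnormSq (W.m i) u :=
  ((summable_sq_mul_cofaceSum hρ hC hu).tsum_le_tsum (sq_mul_cofaceSum_le hC u)
    (hu.mul_left C)).trans_eq tsum_mul_left

lemma hasSum_weight_mul_sum_faces (W : CliqueWeights G n) {i : ℕ} (hi : i + 1 ≤ n)
    {ρ : (Fin (i + 2) → V) → ℝ} (hρ : ∀ τ, 0 ≤ ρ τ)
    (hperm : ∀ τ (σ : Equiv.Perm (Fin (i + 2))), ρ (τ ∘ σ) = ρ τ) {u : (Fin (i + 1) → V) → ℂ}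
    (hS : Summable fun x => ‖u x‖ ^ 2 * cofaceSum W ρ x) :
    HasSum (fun τ => W.m (i + 1) τ * (ρ τ * ∑ j : Fin (i + 2), ‖u (τ ∘ j.succAbove)‖ ^ 2))
      ((i + 2) * ∑' x, ‖u x‖ ^ 2 * cofaceSum W ρ x) := by
  have hFH : ∀ (j : Fin (i + 2)) (x : Fin (i + 1) → V) (y : V),
      ‖u (Fin.insertNth j y x ∘ j.succAbove : Fin (i + 1) → V)‖ ^ 2 *
          (W.m (i + 1) (Fin.insertNth j y x) * ρ (Fin.insertNth j y x)) =
        ‖u x‖ ^ 2 * (W.m (i + 1) (Fin.snoc x y) * ρ (Fin.snoc x y)) := fun j x y => by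
    rw [weight_insertNth W hi, insertNth_eq_snoc_of_comp_perm hperm, insertNth_comp_succAbove]
  have hsummable : Summable fun p : (Fin (i + 1) → V) × V =>
      ‖u p.1‖ ^ 2 * (W.m (i + 1) (Fin.snoc p.1 p.2) * ρ (Fin.snoc p.1 p.2)) := by
    refine (summable_prod_of_nonneg fun p =>
      mul_nonneg (sq_nonneg _) (mul_nonneg (W.nonneg _ _) (hρ _))).2 ⟨fun x => ?_, ?_⟩
    · exact (summable_weight_snoc_mul W hi x fun y => ρ (Fin.snoc x y)).mul_left (‖u x‖ ^ 2)
    · simpa only [tsum_mul_left, cofaceSum] using hS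
  have hsum := hasSum_sum_faces (k := i + 1) (E := ℝ)
    (F := fun j τ => ‖u (τ ∘ j.succAbove)‖ ^ 2 * (W.m (i + 1) τ * ρ τ))
    (H := fun x y => ‖u x‖ ^ 2 * (W.m (i + 1) (Fin.snoc x y) * ρ (Fin.snoc x y))) hFH hsummable
  simp only [tsum_mul_left, nsmul_eq_mul, ← Finset.sum_mul] at hsum
  rw [show ((i + 1 + 1 : ℕ) : ℝ) = i + 2 by push_cast; ring] at hsum
  exact hsum.congr_fun fun τ => by ring

lemma sq_sum_norm_faces_le {i : ℕ} (u : (Fin (i + 1) → V) → ℂ) (τ : Fin (i + 2) → V) :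
    (∑ j : Fin (i + 2), ‖u (τ ∘ j.succAbove)‖) ^ 2 ≤
      (i + 2) * ∑ j : Fin (i + 2), ‖u (τ ∘ j.succAbove)‖ ^ 2 :=
  sq_sum_le_card_mul_sum_sq.trans_eq (by simp)

/-- A Schur test for operators dominated by a sum over faces. -/
lemma memWL2_and_wnormSq_le_of_norm_le_sum_faces (W : CliqueWeights G n) {i : ℕ} (hi : i + 1 ≤ n)
    {ρ : (Fin (i + 2) → V) → ℝ} (hρ : ∀ τ, 0 ≤ ρ τ)
    (hperm : ∀ τ (σ : Equiv.Perm (Fin (i + 2))), ρ (τ ∘ σ) = ρ τ) {u : (Fin (i + 1) → V) → ℂ}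
    (hS : Summable fun x => ‖u x‖ ^ 2 * cofaceSum W ρ x) {w : (Fin (i + 2) → V) → ℂ}
    (hw : ∀ τ, ‖w τ‖ ≤ √(ρ τ) * ∑ j : Fin (i + 2), ‖u (τ ∘ j.succAbove)‖) :
    MemWL2 (W.m (i + 1)) w ∧
      wnormSq (W.m (i + 1)) w ≤ (i + 2) ^ 2 * ∑' x, ‖u x‖ ^ 2 * cofaceSum W ρ x := by
  have hsum := (hasSum_weight_mul_sum_faces W hi hρ hperm hS).mul_left (i + 2 : ℝ)
  have hle : ∀ τ, W.m (i + 1) τ * ‖w τ‖ ^ 2 ≤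
      (i + 2) * (W.m (i + 1) τ * (ρ τ * ∑ j : Fin (i + 2), ‖u (τ ∘ j.succAbove)‖ ^ 2)) := by
    intro τ
    have hsq : ‖w τ‖ ^ 2 ≤ ρ τ * ((i + 2) * ∑ j : Fin (i + 2), ‖u (τ ∘ j.succAbove)‖ ^ 2) :=
      calc ‖w τ‖ ^ 2 ≤ (√(ρ τ) * ∑ j : Fin (i + 2), ‖u (τ ∘ j.succAbove)‖) ^ 2 := by
            gcongr
            exact hw τ
        _ = ρ τ * (∑ j : Fin (i + 2), ‖u (τ ∘ j.succAbove)‖) ^ 2 := by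
            rw [mul_pow, Real.sq_sqrt (hρ τ)]
        _ ≤ _ := mul_le_mul_of_nonneg_left (sq_sum_norm_faces_le u τ) (hρ τ)
    exact (mul_le_mul_of_nonneg_left hsq (W.nonneg _ _)).trans_eq (by ring)
  have hmem : MemWL2 (W.m (i + 1)) w :=
    hsum.summable.of_nonneg_of_le (fun τ => mul_nonneg (W.nonneg _ _) (sq_nonneg _)) hle
  refine ⟨hmem, (hmem.tsum_le_tsum hle hsum.summable).trans_eq ?_⟩
  rw [hsum.tsum_eq]
  ring

lemma norm_d_le {i : ℕ} (u : (Fin (i + 1) → V) → ℂ) (τ : Fin (i + 2) → V) :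
    ‖d G i u τ‖ ≤ ∑ j : Fin (i + 2), ‖u (τ ∘ j.succAbove)‖ := by
  by_cases hτ : IsSimplex G τ
  · rw [d_apply _ hτ]
    exact (norm_sum_le _ _).trans_eq (by simp)
  · rw [d_apply_of_not_isSimplex _ hτ, norm_zero]
    positivity

lemma norm_d_mul_sub_le {i : ℕ} (θ : (Fin (i + 1) → V) → ℝ) (t : ℝ) (u : (Fin (i + 1) → V) → ℂ)
    (τ : Fin (i + 2) → V) :
    ‖d G i (fun x => (θ x : ℂ) * u x) τ - t * d G i u τ‖ ≤
      ∑ j : Fin (i + 2), |θ (τ ∘ j.succAbove) - t| * ‖u (τ ∘ j.succAbove)‖ := by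
  have hsplit : (fun x => (θ x : ℂ) * u x) =
      (fun x => ((θ x - t : ℝ) : ℂ) * u x) + (t : ℂ) • u := by
    funext x
    simp only [Pi.add_apply, Pi.smul_apply, smul_eq_mul, Complex.ofReal_sub]
    ring
  have hcomm : d G i (fun x => (θ x : ℂ) * u x) τ - t * d G i u τ =
      d G i (fun x => ((θ x - t : ℝ) : ℂ) * u x) τ := by
    rw [hsplit, d_add, d_smul, Pi.add_apply, Pi.smul_apply, smul_eq_mul, add_sub_cancel_right]
  rw [hcomm]
  exact (norm_d_le _ τ).trans_eq (by simp only [norm_mul, Complex.norm_real, Real.norm_eq_abs])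

end Faces

section Cofaces

open ComplexConjugate

variable {G : WG V} {n : ℕ}

lemma summable_cofaceSum_norm_sq {W : CliqueWeights G n} {i : ℕ} {v : (Fin (i + 2) → V) → ℂ}
    (hv : MemWL2 (W.m (i + 1)) v) : Summable fun x => cofaceSum W (fun τ => ‖v τ‖ ^ 2) x := by
  have hprod := (faceEquiv V (Fin.last (i + 1))).summable_iff.2 hv
  refine ((summable_prod_of_nonneg fun p => mul_nonneg (W.nonneg _ _) (sq_nonneg _)).1
    hprod).2.congr fun x => tsum_congr fun y => ?_
  simp [faceEquiv_apply, Fin.insertNth_last']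

lemma norm_delta_mul_sq_le (W : CliqueWeights G n) {i : ℕ} (hi : i + 1 ≤ n)
    (θ : (Fin (i + 2) → V) → ℝ) (v : (Fin (i + 2) → V) → ℂ) (x : Fin (i + 1) → V) :
    ‖delta G W i (fun τ => (θ τ : ℂ) * v τ) x‖ ^ 2 ≤
      cofaceSum W (fun τ => θ τ ^ 2) x / W.m i x *
        (cofaceSum W (fun τ => ‖v τ‖ ^ 2) x / W.m i x) := by
  set μ : V → ℝ := fun y => W.m (i + 1) (Fin.snoc x y) with hμ
  set f : V → ℂ := fun y => (θ (Fin.snoc x y) : ℂ) with hf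
  set g : V → ℂ := fun y => conj (v (Fin.snoc x y)) with hg
  have hcs : ‖wip μ f g‖ ^ 2 ≤ wnormSq μ f * wnormSq μ g :=
    norm_wip_sq_le (fun y => W.nonneg _ _) (summable_weight_snoc_mul W hi x _)
      (summable_weight_snoc_mul W hi x _)
  have hwip : delta G W i (fun τ => (θ τ : ℂ) * v τ) x = (W.m i x : ℂ)⁻¹ * wip μ f g := by
    simp only [delta_apply, wip, hμ, hf, hg, Complex.conj_conj, mul_assoc]
  have hf2 : wnormSq μ f = cofaceSum W (fun τ => θ τ ^ 2) x := by
    simp only [wnormSq, cofaceSum, hμ, hf, Complex.norm_real, Real.norm_eq_abs, sq_abs]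
  have hg2 : wnormSq μ g = cofaceSum W (fun τ => ‖v τ‖ ^ 2) x := by
    simp only [wnormSq, cofaceSum, hμ, hg, Complex.norm_conj]
  rw [hwip, norm_mul, mul_pow, norm_inv, Complex.norm_real, Real.norm_of_nonneg (W.nonneg i x),
    ← hf2, ← hg2]
  calc (W.m i x)⁻¹ ^ 2 * ‖wip μ f g‖ ^ 2
      ≤ (W.m i x)⁻¹ ^ 2 * (wnormSq μ f * wnormSq μ g) :=
        mul_le_mul_of_nonneg_left hcs (sq_nonneg _)
    _ = wnormSq μ f / W.m i x * (wnormSq μ g / W.m i x) := by ring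

/-- A majorant in `ℓ²(m_i)` of all `delta (θ v)` whose coefficients `θ` have energy at most
`C m_i`. -/
noncomputable def deltaMajorant (W : CliqueWeights G n) {i : ℕ} (C : ℝ)
    (v : (Fin (i + 2) → V) → ℂ) (x : Fin (i + 1) → V) : ℂ :=
  (√(C * (cofaceSum W (fun τ => ‖v τ‖ ^ 2) x / W.m i x)) : ℂ)

lemma norm_deltaMajorant_sq (W : CliqueWeights G n) {i : ℕ} {C : ℝ} (hC : 0 ≤ C)
    (v : (Fin (i + 2) → V) → ℂ) (x : Fin (i + 1) → V) :
    ‖deltaMajorant W C v x‖ ^ 2 = C * (cofaceSum W (fun τ => ‖v τ‖ ^ 2) x / W.m i x) := by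
  rw [deltaMajorant, Complex.norm_real, Real.norm_eq_abs, sq_abs, Real.sq_sqrt]
  exact mul_nonneg hC (div_nonneg (cofaceSum_nonneg W (fun _ => sq_nonneg _) x) (W.nonneg i x))

lemma memWL2_deltaMajorant {W : CliqueWeights G n} {i : ℕ} {C : ℝ} (hC : 0 ≤ C)
    {v : (Fin (i + 2) → V) → ℂ} (hv : MemWL2 (W.m (i + 1)) v) :
    MemWL2 (W.m i) (deltaMajorant W C v) := by
  refine ((summable_cofaceSum_norm_sq hv).mul_left C).of_nonneg_of_le
    (fun x => mul_nonneg (W.nonneg i x) (sq_nonneg _)) fun x => ?_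
  rw [norm_deltaMajorant_sq W hC, mul_left_comm]
  refine mul_le_mul_of_nonneg_left ?_ hC
  rcases (W.nonneg i x).eq_or_lt with hx | hx
  · simpa only [← hx, zero_mul] using cofaceSum_nonneg W (fun _ => sq_nonneg _) x
  · exact (mul_div_cancel₀ _ hx.ne').le

lemma norm_delta_mul_le_norm_deltaMajorant (W : CliqueWeights G n) {i : ℕ} (hi : i + 1 ≤ n)
    {C : ℝ} (hC : 0 ≤ C) (θ : (Fin (i + 2) → V) → ℝ) (v : (Fin (i + 2) → V) → ℂ)
    {x : Fin (i + 1) → V} (hθ : cofaceSum W (fun τ => θ τ ^ 2) x ≤ C * W.m i x) :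
    ‖delta G W i (fun τ => (θ τ : ℂ) * v τ) x‖ ≤ ‖deltaMajorant W C v x‖ := by
  refine (sq_le_sq₀ (norm_nonneg _) (norm_nonneg _)).1 ?_
  rw [norm_deltaMajorant_sq W hC]
  exact (norm_delta_mul_sq_le W hi θ v x).trans (mul_le_mul_of_nonneg_right
    (div_le_of_le_mul₀ (W.nonneg i x) hC hθ)
    (div_nonneg (cofaceSum_nonneg W (fun _ => sq_nonneg _) x) (W.nonneg i x)))

end Cofaces

section Cutoffs

variable {G : WG V} {n : ℕ}

/-- The extension of a vertex function to simplices by its minimum over the vertices. Unlike the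
average it can only increase when passing to a face. -/
noncomputable def cut (χ : V → ℝ) {i : ℕ} (x : Fin (i + 1) → V) : ℝ :=
  Finset.univ.inf' Finset.univ_nonempty (χ ∘ x)

/-- Multiplication of a function on simplices by the cut-off `cut χ`. -/
noncomputable def cutMul (χ : V → ℝ) {i : ℕ} (f : (Fin (i + 1) → V) → ℂ) :
    (Fin (i + 1) → V) → ℂ :=
  fun x => (cut χ x : ℂ) * f x

lemma cut_le (χ : V → ℝ) {i : ℕ} (x : Fin (i + 1) → V) (a : Fin (i + 1)) : cut χ x ≤ χ (x a) :=
  Finset.inf'_le _ (Finset.mem_univ a)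

lemma exists_cut_eq (χ : V → ℝ) {i : ℕ} (x : Fin (i + 1) → V) : ∃ a, cut χ x = χ (x a) := by
  obtain ⟨a, -, ha⟩ := Finset.exists_mem_eq_inf' Finset.univ_nonempty (χ ∘ x)
  exact ⟨a, ha⟩

lemma cut_le_cut_comp (χ : V → ℝ) {i j : ℕ} (τ : Fin (i + 1) → V) (e : Fin (j + 1) → Fin (i + 1)) :
    cut χ τ ≤ cut χ (τ ∘ e) := by
  obtain ⟨a, ha⟩ := exists_cut_eq χ (τ ∘ e)
  exact ha ▸ cut_le χ τ (e a)

lemma cut_comp_perm (χ : V → ℝ) {i : ℕ} (x : Fin (i + 1) → V) (σ : Equiv.Perm (Fin (i + 1))) :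
    cut χ (x ∘ σ) = cut χ x := by
  refine le_antisymm ?_ (cut_le_cut_comp χ x σ)
  simpa [comp_assoc] using cut_le_cut_comp χ (x ∘ σ) σ.symm

lemma cut_comp_sub_cut_sq_le_osc (χ : V → ℝ) {i j : ℕ} (τ : Fin (i + 1) → V)
    (e : Fin (j + 1) → Fin (i + 1)) : (cut χ (τ ∘ e) - cut χ τ) ^ 2 ≤ osc χ τ := by
  obtain ⟨a, ha⟩ := exists_cut_eq χ (τ ∘ e)
  obtain ⟨b, hb⟩ := exists_cut_eq χ τ
  rw [ha, hb]
  exact sub_sq_le_osc χ τ (e a) b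

lemma isCochain_cutMul (χ : V → ℝ) {i : ℕ} {f : (Fin (i + 1) → V) → ℂ} (hf : IsCochain G i f) :
    IsCochain G i (cutMul χ f) := by
  refine ⟨fun x σ => ?_, fun x hx => ?_⟩
  · rw [cutMul, cutMul, cut_comp_perm, hf.1, mul_left_comm]
  · rw [cutMul, hf.2 x hx, mul_zero]

lemma norm_d_cutMul_sub_le (χ : V → ℝ) {i : ℕ} (u : (Fin (i + 1) → V) → ℂ)
    (τ : Fin (i + 2) → V) :
    ‖(d G i (cutMul χ u) - cutMul χ (d G i u)) τ‖ ≤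
      √(osc χ τ) * ∑ j : Fin (i + 2), ‖u (τ ∘ j.succAbove)‖ := by
  refine (norm_d_mul_sub_le (cut χ) (cut χ τ) u τ).trans ?_
  rw [Finset.mul_sum]
  exact Finset.sum_le_sum fun j _ => mul_le_mul_of_nonneg_right
    (Real.abs_le_sqrt (cut_comp_sub_cut_sq_le_osc χ τ j.succAbove)) (norm_nonneg _)

lemma delta_cutMul_sub (W : CliqueWeights G n) (χ : V → ℝ) {i : ℕ} (hi : i + 1 ≤ n)
    (v : (Fin (i + 2) → V) → ℂ) (x : Fin (i + 1) → V) :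
    (delta G W i (cutMul χ v) - cutMul χ (delta G W i v)) x =
      delta G W i (fun τ => ((cut χ τ - cut χ x : ℝ) : ℂ) * v τ) x := by
  have hsplit : cutMul χ v =
      (fun τ => ((cut χ τ - cut χ x : ℝ) : ℂ) * v τ) + (cut χ x : ℂ) • v := by
    funext τ
    simp only [cutMul, Pi.add_apply, Pi.smul_apply, smul_eq_mul, Complex.ofReal_sub]
    ring
  rw [hsplit, delta_add W hi, delta_smul, Pi.sub_apply, Pi.add_apply, Pi.smul_apply, smul_eq_mul,
    cutMul, add_sub_cancel_right]

lemma cofaceSum_cut_sub_sq_le (W : CliqueWeights G n) (χ : V → ℝ) {i : ℕ} (hi : i + 1 ≤ n)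
    (x : Fin (i + 1) → V) :
    cofaceSum W (fun τ => (cut χ τ - cut χ x) ^ 2) x ≤ cofaceSum W (osc χ) x :=
  cofaceSum_mono W hi fun y => by
    have h := cut_comp_sub_cut_sq_le_osc χ (Fin.snoc x y : Fin (i + 2) → V) Fin.castSucc
    rwa [snoc_comp_castSucc, sub_sq_comm] at h

namespace IsCutoff

variable {W : CliqueWeights G n} {χ : ℕ → V → ℝ} {C : ℕ → ℝ} (hχ : IsCutoff W χ C)
include hχ

lemma cut_mem_Icc (k : ℕ) {i : ℕ} (x : Fin (i + 1) → V) : cut (χ k) x ∈ Icc (0 : ℝ) 1 := by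
  obtain ⟨a, ha⟩ := exists_cut_eq (χ k) x
  exact ha ▸ hχ.mem_Icc k (x a)

lemma finite_support_cutMul (k : ℕ) {i : ℕ} (f : (Fin (i + 1) → V) → ℂ) :
    (support (cutMul (χ k) f)).Finite := by
  refine (Set.Finite.pi' fun _ : Fin (i + 1) => hχ.finite_support k).subset fun x hx a ha => hx ?_
  have hcut : cut (χ k) x = 0 := le_antisymm (ha ▸ cut_le (χ k) x a) (hχ.cut_mem_Icc k x).1
  rw [cutMul, hcut, Complex.ofReal_zero, zero_mul]

lemma eventually_cut_eq_one {i : ℕ} (x : Fin (i + 1) → V) : ∀ᶠ k in atTop, cut (χ k) x = 1 := by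
  filter_upwards [eventually_all.2 fun a => hχ.eventually_one (x a)] with k hk
  obtain ⟨a, ha⟩ := exists_cut_eq (χ k) x
  rw [ha, hk]

lemma eventually_cutMul_eq {i : ℕ} (f : (Fin (i + 1) → V) → ℂ) (x : Fin (i + 1) → V) :
    ∀ᶠ k in atTop, cutMul (χ k) f x = f x := by
  filter_upwards [hχ.eventually_cut_eq_one x] with k hk
  rw [cutMul, hk, Complex.ofReal_one, one_mul]

lemma norm_cutMul_le (k : ℕ) {i : ℕ} (f : (Fin (i + 1) → V) → ℂ) (x : Fin (i + 1) → V) :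
    ‖cutMul (χ k) f x‖ ≤ ‖f x‖ := by
  rw [cutMul, norm_mul, Complex.norm_real, Real.norm_of_nonneg (hχ.cut_mem_Icc k x).1]
  exact mul_le_of_le_one_left (norm_nonneg _) (hχ.cut_mem_Icc k x).2

lemma nullSeq_cutMul_sub {i : ℕ} {f : (Fin (i + 1) → V) → ℂ} (hf : MemWL2 (W.m i) f) :
    NullSeq (W.m i) fun k => cutMul (χ k) f - f := by
  refine .of_dominated (W.nonneg i) hf (fun k x => ?_) fun x => ?_
  · have hfactor : (cutMul (χ k) f - f) x = ((cut (χ k) x - 1 : ℝ) : ℂ) * f x := by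
      simp only [cutMul, Pi.sub_apply, Complex.ofReal_sub, Complex.ofReal_one]
      ring
    rw [hfactor, norm_mul, Complex.norm_real, Real.norm_eq_abs]
    refine mul_le_of_le_one_left (norm_nonneg _) (abs_le.2 ?_)
    constructor <;> linarith [(hχ.cut_mem_Icc k x).1, (hχ.cut_mem_Icc k x).2]
  · refine tendsto_const_nhds.congr' ?_
    filter_upwards [hχ.eventually_cutMul_eq f x] with k hk
    rw [Pi.sub_apply, hk, sub_self]

lemma eventually_cofaceSum_osc_eq_zero {i : ℕ} (hi : i + 1 ≤ n) (x : Fin (i + 1) → V) :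
    ∀ᶠ k in atTop, cofaceSum W (osc (χ k)) x = 0 := by
  have hvertices : ∀ᶠ k in atTop, ∀ a, χ k (x a) = 1 :=
    eventually_all.2 fun a => hχ.eventually_one _
  have hneighbors : ∀ᶠ k in atTop, ∀ y ∈ {y | W.m (i + 1) (Fin.snoc x y) ≠ 0}, χ k y = 1 :=
    (eventually_all_finite (finite_weight_snoc_ne_zero W hi x)).2 fun y _ => hχ.eventually_one _
  filter_upwards [hvertices, hneighbors] with k hx hy
  refine (tsum_congr fun y => ?_).trans tsum_zero
  by_cases hm : W.m (i + 1) (Fin.snoc x y) = 0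
  · rw [hm, zero_mul]
  have hone : ∀ a, χ k ((Fin.snoc x y : Fin (i + 2) → V) a) = 1 :=
    Fin.lastCases (by rw [Fin.snoc_last]; exact hy y hm)
      fun b => by rw [Fin.snoc_castSucc]; exact hx b
  simp [osc, hone]

lemma tendsto_tsum_sq_mul_cofaceSum_osc {i : ℕ} (hi : i + 1 ≤ n) {u : (Fin (i + 1) → V) → ℂ}
    (hu : MemWL2 (W.m i) u) :
    Tendsto (fun k => ∑' x, ‖u x‖ ^ 2 * cofaceSum W (osc (χ k)) x) atTop (𝓝 0) := by
  have hlim : Tendsto (fun k => ∑' x, ‖u x‖ ^ 2 * cofaceSum W (osc (χ k)) x) atTop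
      (𝓝 (∑' _ : Fin (i + 1) → V, (0 : ℝ))) := by
    refine tendsto_tsum_of_dominated_convergence (hu.mul_left (C i)) (fun x => ?_)
      (Eventually.of_forall fun k x => ?_)
    · refine tendsto_const_nhds.congr' ?_
      filter_upwards [hχ.eventually_cofaceSum_osc_eq_zero hi x] with k hk
      rw [hk, mul_zero]
    · rw [Real.norm_of_nonneg (mul_nonneg (sq_nonneg _) (cofaceSum_nonneg W (osc_nonneg _) x))]
      exact sq_mul_cofaceSum_le (hχ.energy_le k i hi) u x
  rwa [tsum_zero] at hlim

lemma nullSeq_d_cutMul_sub_cutMul_d {i : ℕ} (hi : i + 1 ≤ n) {u : (Fin (i + 1) → V) → ℂ}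
    (hu : MemWL2 (W.m i) u) :
    NullSeq (W.m (i + 1)) fun k => d G i (cutMul (χ k) u) - cutMul (χ k) (d G i u) := by
  have hschur := fun k => memWL2_and_wnormSq_le_of_norm_le_sum_faces W hi (osc_nonneg (χ k))
    (osc_comp_perm (χ k)) (summable_sq_mul_cofaceSum (osc_nonneg (χ k)) (hχ.energy_le k i hi) hu)
    (norm_d_cutMul_sub_le (G := G) (χ k) u)
  refine .of_wnormSq_le (W.nonneg _) (fun k => (hschur k).1) (fun k => (hschur k).2) ?_
  simpa only [mul_zero] using (hχ.tendsto_tsum_sq_mul_cofaceSum_osc hi hu).const_mul _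

lemma nullSeq_delta_cutMul_sub_cutMul_delta {i : ℕ} (hi : i + 1 ≤ n) {v : (Fin (i + 2) → V) → ℂ}
    (hv : MemWL2 (W.m (i + 1)) v) :
    NullSeq (W.m i) fun k => delta G W i (cutMul (χ k) v) - cutMul (χ k) (delta G W i v) := by
  refine .of_dominated (W.nonneg i) (memWL2_deltaMajorant (hχ.pos i).le hv) (fun k x => ?_)
    fun x => ?_
  · rw [delta_cutMul_sub W _ hi]
    exact norm_delta_mul_le_norm_deltaMajorant W hi (hχ.pos i).le _ v
      ((cofaceSum_cut_sub_sq_le W _ hi x).trans (hχ.energy_le k i hi x))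
  · refine tendsto_const_nhds.congr' ?_
    filter_upwards [hχ.eventually_cofaceSum_osc_eq_zero hi x] with k hk
    have hzero : cofaceSum W (fun τ => (cut (χ k) τ - cut (χ k) x) ^ 2) x = 0 :=
      le_antisymm ((cofaceSum_cut_sub_sq_le W _ hi x).trans_eq hk)
        (cofaceSum_nonneg W (fun _ => sq_nonneg _) x)
    have hle := norm_delta_mul_sq_le W hi (fun τ => cut (χ k) τ - cut (χ k) x) v x
    rw [hzero, zero_div, zero_mul] at hle
    rw [delta_cutMul_sub W _ hi, eq_comm, ← norm_eq_zero, ← sq_eq_zero_iff]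
    exact le_antisymm hle (sq_nonneg _)

lemma nullSeq_d_cutMul_sub {i : ℕ} (hi : i + 1 ≤ n) {u : (Fin (i + 1) → V) → ℂ}
    (hu : MemWL2 (W.m i) u) (hdu : MemWL2 (W.m (i + 1)) (d G i u)) :
    NullSeq (W.m (i + 1)) fun k => d G i (cutMul (χ k) u) - d G i u := by
  simpa only [sub_add_sub_cancel] using
    (hχ.nullSeq_d_cutMul_sub_cutMul_d hi hu).add (W.nonneg _) (hχ.nullSeq_cutMul_sub hdu)

lemma wip_d_eq_wip_delta {i : ℕ} (hi : i + 1 ≤ n) {u : (Fin (i + 1) → V) → ℂ}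
    (hu : MemWL2 (W.m i) u) (hdu : MemWL2 (W.m (i + 1)) (d G i u)) {v : (Fin (i + 2) → V) → ℂ}
    (hva : IsAlternating v) (hv : MemWL2 (W.m (i + 1)) v) (hδv : MemWL2 (W.m i) (delta G W i v)) :
    wip (W.m (i + 1)) (d G i u) v = greenConst i * wip (W.m i) u (delta G W i v) := by
  have hleft := (hχ.nullSeq_d_cutMul_sub hi hu hdu).tendsto_wip (W.nonneg _) hdu hv
  have hright := ((hχ.nullSeq_cutMul_sub hu).tendsto_wip (W.nonneg _) hu hδv).const_mul
    (greenConst i : ℂ)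
  refine tendsto_nhds_unique hleft (hright.congr fun k => ?_)
  exact (green_left W hi (hχ.finite_support_cutMul k u) hva).symm

lemma memWL2_d_of_odd {i : ℕ} (hi : i + 1 ≤ n) (hodd : Odd i) {u : (Fin (i + 1) → V) → ℂ}
    (hu : MemWL2 (W.m i) u) : MemWL2 (W.m (i + 1)) (d G i u) := by
  have hC : ∀ x, cofaceSum W (fun _ : Fin (i + 2) → V => 1) x ≤ C i * W.m i x := fun x => by
    simpa only [cofaceSum, mul_one] using hχ.weight_le i hodd hi x
  refine (memWL2_and_wnormSq_le_of_norm_le_sum_faces W hi (fun _ => zero_le_one) (fun _ _ => rfl)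
    (summable_sq_mul_cofaceSum (fun _ => zero_le_one) hC hu) fun τ => ?_).1
  rw [Real.sqrt_one, one_mul]
  exact norm_d_le u τ

lemma memWL2_delta_of_odd {i : ℕ} (hi : i + 1 ≤ n) (hodd : Odd i) {v : (Fin (i + 2) → V) → ℂ}
    (hv : MemWL2 (W.m (i + 1)) v) : MemWL2 (W.m i) (delta G W i v) := by
  refine (memWL2_deltaMajorant (hχ.pos i).le hv).of_norm_le (W.nonneg i) fun x => ?_
  have hθ : cofaceSum W (fun _ : Fin (i + 2) → V => (1 : ℝ) ^ 2) x ≤ C i * W.m i x := by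
    simpa only [cofaceSum, one_pow, mul_one] using hχ.weight_le i hodd hi x
  simpa using norm_delta_mul_le_norm_deltaMajorant W hi (hχ.pos i).le (fun _ => 1) v hθ

end IsCutoff

end Cutoffs

/-! ### Regularity on the maximal domain of the Laplacian -/

section Localization

open ComplexConjugate

lemma inner_sum_sq_smul_sum {ι E : Type*} [Fintype ι] [NormedAddCommGroup E]
    [InnerProductSpace ℝ E] (θ : ι → ℝ) (a : ι → E) :
    inner ℝ (∑ j, θ j ^ 2 • a j) (∑ k, a k) =
      ‖∑ j, θ j • a j‖ ^ 2 + 2⁻¹ * ∑ j, ∑ k, (θ j - θ k) ^ 2 * inner ℝ (a j) (a k) := by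
  have hsymm : ∑ j, ∑ k, θ k ^ 2 * inner ℝ (a j) (a k) =
      ∑ j, ∑ k, θ j ^ 2 * inner ℝ (a j) (a k) := by
    rw [Finset.sum_comm]
    simp only [real_inner_comm]
  have hexpand : ∑ j, ∑ k, (θ j - θ k) ^ 2 * inner ℝ (a j) (a k) =
      ∑ j, ∑ k, θ j ^ 2 * inner ℝ (a j) (a k) + ∑ j, ∑ k, θ k ^ 2 * inner ℝ (a j) (a k) -
        2 * ∑ j, ∑ k, θ j * (θ k * inner ℝ (a j) (a k)) := by
    simp only [Finset.mul_sum, ← Finset.sum_add_distrib, ← Finset.sum_sub_distrib]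
    exact Finset.sum_congr rfl fun j _ => Finset.sum_congr rfl fun k _ => by ring
  have hnorm : ‖∑ j, θ j • a j‖ ^ 2 = ∑ j, ∑ k, θ j * (θ k * inner ℝ (a j) (a k)) := by
    rw [← real_inner_self_eq_norm_sq, sum_inner]
    exact Finset.sum_congr rfl fun j _ => by
      simp only [inner_sum, real_inner_smul_left, real_inner_smul_right, mul_left_comm]
  have hinner : inner ℝ (∑ j, θ j ^ 2 • a j) (∑ k, a k) =
      ∑ j, ∑ k, θ j ^ 2 * inner ℝ (a j) (a k) := by
    rw [sum_inner]
    simp only [inner_sum, real_inner_smul_left]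
  rw [hnorm, hinner, hexpand, hsymm]
  ring

lemma norm_sum_smul_sq_le {ι E : Type*} [Fintype ι] [NormedAddCommGroup E]
    [InnerProductSpace ℝ E] {θ : ι → ℝ} {q : ℝ} (hθ : ∀ j k, (θ j - θ k) ^ 2 ≤ q) (a : ι → E) :
    ‖∑ j, θ j • a j‖ ^ 2 ≤
      inner ℝ (∑ j, θ j ^ 2 • a j) (∑ k, a k) + 2⁻¹ * (q * (∑ j, ‖a j‖) ^ 2) := by
  have hterm : ∀ j k, -((θ j - θ k) ^ 2 * inner ℝ (a j) (a k)) ≤ q * (‖a j‖ * ‖a k‖) := fun j k =>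
    calc -((θ j - θ k) ^ 2 * inner ℝ (a j) (a k))
        = (θ j - θ k) ^ 2 * -inner ℝ (a j) (a k) := by ring
      _ ≤ (θ j - θ k) ^ 2 * (‖a j‖ * ‖a k‖) :=
        mul_le_mul_of_nonneg_left ((neg_le_abs _).trans (abs_real_inner_le_norm _ _)) (sq_nonneg _)
      _ ≤ q * (‖a j‖ * ‖a k‖) := mul_le_mul_of_nonneg_right (hθ j k) (by positivity)
  have hsum : -∑ j, ∑ k, (θ j - θ k) ^ 2 * inner ℝ (a j) (a k) ≤ q * (∑ j, ‖a j‖) ^ 2 := by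
    rw [sq (∑ j, ‖a j‖), Finset.sum_mul_sum]
    simp only [← Finset.sum_neg_distrib, Finset.mul_sum]
    exact Finset.sum_le_sum fun j _ => Finset.sum_le_sum fun k _ => hterm j k
  linarith [inner_sum_sq_smul_sum θ a]

variable {G : WG V} {n : ℕ}

lemma cut_comp_sub_cut_comp_sq_le_osc (χ : V → ℝ) {i j : ℕ} (τ : Fin (i + 1) → V)
    (e e' : Fin (j + 1) → Fin (i + 1)) : (cut χ (τ ∘ e) - cut χ (τ ∘ e')) ^ 2 ≤ osc χ τ := by
  obtain ⟨a, ha⟩ := exists_cut_eq χ (τ ∘ e)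
  obtain ⟨b, hb⟩ := exists_cut_eq χ (τ ∘ e')
  rw [ha, hb]
  exact sub_sq_le_osc χ τ (e a) (e' b)

lemma norm_d_cutMul_sq_le (χ : V → ℝ) {i : ℕ} (u : (Fin (i + 1) → V) → ℂ) (τ : Fin (i + 2) → V) :
    ‖d G i (cutMul χ u) τ‖ ^ 2 ≤
      (d G i (cutMul χ (cutMul χ u)) τ * conj (d G i u τ)).re +
        2⁻¹ * ((i + 2) * (osc χ τ * ∑ j : Fin (i + 2), ‖u (τ ∘ j.succAbove)‖ ^ 2)) := by
  by_cases hτ : IsSimplex G τ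
  swap
  · simp only [d_apply_of_not_isSimplex _ hτ, norm_zero, map_zero, mul_zero, Complex.zero_re]
    have hosc := osc_nonneg χ τ
    simp only [ne_eq, OfNat.ofNat_ne_zero, not_false_eq_true, zero_pow, zero_add]
    positivity
  set θ : Fin (i + 2) → ℝ := fun j => cut χ (τ ∘ j.succAbove) with hθ
  set a : Fin (i + 2) → ℂ := fun j => (-1) ^ (j : ℕ) * u (τ ∘ j.succAbove) with ha
  have hnorm : ∀ j, ‖a j‖ = ‖u (τ ∘ j.succAbove)‖ := fun j => by simp [ha]
  have hd : d G i u τ = ∑ j, a j := d_apply _ hτ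
  have hdθ : d G i (cutMul χ u) τ = ∑ j, θ j • a j := by
    simp only [d_apply _ hτ, cutMul, ha, hθ, Complex.real_smul, mul_left_comm]
  have hdθ2 : d G i (cutMul χ (cutMul χ u)) τ = ∑ j, θ j ^ 2 • a j := by
    simp only [d_apply _ hτ, cutMul, ha, hθ, sq, mul_smul, Complex.real_smul, mul_left_comm]
  have hinner : (d G i (cutMul χ (cutMul χ u)) τ * conj (d G i u τ)).re =
      inner ℝ (∑ j, θ j ^ 2 • a j) (∑ j, a j) := by
    rw [hd, hdθ2, real_inner_comm, Complex.inner]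
  have hloc := norm_sum_smul_sq_le (θ := θ)
    (fun j k : Fin (i + 2) => cut_comp_sub_cut_comp_sq_le_osc χ τ j.succAbove k.succAbove) a
  have hsq := mul_le_mul_of_nonneg_left (sq_sum_norm_faces_le u τ) (osc_nonneg χ τ)
  rw [hdθ, hinner]
  simp only [hnorm] at hloc
  linarith

end Localization

namespace IsCutoff

open ComplexConjugate

variable {G : WG V} {n : ℕ} {W : CliqueWeights G n} {χ : ℕ → V → ℝ} {C : ℕ → ℝ}
  (hχ : IsCutoff W χ C)
include hχ

lemma wnormSq_d_cutMul_le (k : ℕ) {i : ℕ} (hi : i + 1 ≤ n) {u : (Fin (i + 1) → V) → ℂ}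
    (hu : MemWL2 (W.m i) u) :
    wnormSq (W.m (i + 1)) (d G i (cutMul (χ k) u)) ≤
      (wip (W.m (i + 1)) (d G i (cutMul (χ k) (cutMul (χ k) u))) (d G i u)).re +
        2⁻¹ * ((i + 2) * ((i + 2) * (C i * wnormSq (W.m i) u))) := by
  have hfin : ∀ f : (Fin (i + 1) → V) → ℂ, (support (d G i (cutMul (χ k) f))).Finite :=
    fun f => finite_support_d (hχ.finite_support_cutMul k f)
  have hsummable : Summable fun τ => (W.m (i + 1) τ : ℂ) *
      d G i (cutMul (χ k) (cutMul (χ k) u)) τ * conj (d G i u τ) :=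
    summable_of_hasFiniteSupport ((hfin (cutMul (χ k) u)).subset fun τ hτ =>
      right_ne_zero_of_mul (left_ne_zero_of_mul hτ))
  have hosc := hasSum_weight_mul_sum_faces W hi (osc_nonneg (χ k)) (osc_comp_perm (χ k))
    (summable_sq_mul_cofaceSum (osc_nonneg (χ k)) (hχ.energy_le k i hi) hu)
  have henergy := tsum_sq_mul_cofaceSum_le (osc_nonneg (χ k)) (hχ.energy_le k i hi) hu
  have hpointwise : ∀ τ, W.m (i + 1) τ * ‖d G i (cutMul (χ k) u) τ‖ ^ 2 ≤
      ((W.m (i + 1) τ : ℂ) * d G i (cutMul (χ k) (cutMul (χ k) u)) τ * conj (d G i u τ)).re +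
        2⁻¹ * ((i + 2) * (W.m (i + 1) τ *
          (osc (χ k) τ * ∑ j : Fin (i + 2), ‖u (τ ∘ j.succAbove)‖ ^ 2))) := fun τ => by
    rw [mul_assoc, Complex.re_ofReal_mul]
    exact (mul_le_mul_of_nonneg_left (norm_d_cutMul_sq_le (χ k) u τ) (W.nonneg _ τ)).trans_eq
      (by ring)
  refine (hasSum_le hpointwise (MemWL2.of_finite_support _ (hfin u)).hasSum
    ((Complex.hasSum_re hsummable.hasSum).add
      ((hosc.mul_left (i + 2 : ℝ)).mul_left 2⁻¹))).trans (add_le_add le_rfl ?_)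
  gcongr

/-- Test `δ d u` against `χ_k² u`. -/
lemma memWL2_d {i : ℕ} (hi : i + 1 ≤ n) {u : (Fin (i + 1) → V) → ℂ} (huc : IsCochain G i u)
    (hu : MemWL2 (W.m i) u) (hδdu : MemWL2 (W.m i) (delta G W i (d G i u))) :
    MemWL2 (W.m (i + 1)) (d G i u) := by
  refine MemWL2.of_eventually_eq (W.nonneg _)
    (B := (i + 2) * √(wnormSq (W.m i) u * wnormSq (W.m i) (delta G W i (d G i u))) +
      2⁻¹ * ((i + 2) * ((i + 2) * (C i * wnormSq (W.m i) u))))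
    (fun k => .of_finite_support _ (finite_support_d (hχ.finite_support_cutMul k u)))
    (fun k => (hχ.wnormSq_d_cutMul_le k hi hu).trans (add_le_add ?_ le_rfl)) fun τ => ?_
  · set u₂ := cutMul (χ k) (cutMul (χ k) u)
    have hle : ∀ x, ‖u₂ x‖ ≤ ‖u x‖ := fun x =>
      (hχ.norm_cutMul_le k _ x).trans (hχ.norm_cutMul_le k u x)
    have hwip : ‖wip (W.m i) u₂ (delta G W i (d G i u))‖ ≤
        √(wnormSq (W.m i) u * wnormSq (W.m i) (delta G W i (d G i u))) := by
      refine Real.le_sqrt_of_sq_le ((norm_wip_sq_le (W.nonneg i)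
        (hu.of_norm_le (W.nonneg i) hle) hδdu).trans ?_)
      exact mul_le_mul_of_nonneg_right (wnormSq_le_of_norm_le (W.nonneg i) hu hle)
        (wnormSq_nonneg (W.nonneg i) _)
    refine (Complex.re_le_norm _).trans ?_
    rw [green_left W hi (hχ.finite_support_cutMul k _) (isCochain_d huc).1, norm_mul,
      Complex.norm_real, Real.norm_eq_abs, abs_greenConst]
    gcongr
  · filter_upwards [eventually_all.2 fun j : Fin (i + 2) =>
      hχ.eventually_cutMul_eq u (τ ∘ j.succAbove)] with k hk
    by_cases hτ : IsSimplex G τ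
    · simp only [d_apply _ hτ, hk]
    · simp only [d_apply_of_not_isSimplex _ hτ]

lemma norm_d_cutMul_cutMul_sub_le (k : ℕ) {i : ℕ} (u : (Fin (i + 1) → V) → ℂ)
    (τ : Fin (i + 2) → V) :
    ‖(d G i (cutMul (χ k) (cutMul (χ k) u)) - cutMul (χ k) (cutMul (χ k) (d G i u))) τ‖ ≤
      √(4 * osc (χ k) τ) * ∑ j : Fin (i + 2), ‖cutMul (χ k) u (τ ∘ j.succAbove)‖ := by
  have hd := norm_d_mul_sub_le (G := G) (fun x => cut (χ k) x ^ 2) (cut (χ k) τ ^ 2) u τ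
  simp only [sq, Complex.ofReal_mul, mul_assoc] at hd
  refine hd.trans ?_
  rw [Finset.mul_sum]
  refine Finset.sum_le_sum fun j _ => ?_
  set s := cut (χ k) (τ ∘ j.succAbove)
  set t := cut (χ k) τ
  have hs : 0 ≤ s := (hχ.cut_mem_Icc k _).1
  have ht : 0 ≤ t := (hχ.cut_mem_Icc k _).1
  have hts : t ≤ s := cut_le_cut_comp _ τ _
  have hosc : |s - t| ≤ √(osc (χ k) τ) := Real.abs_le_sqrt (cut_comp_sub_cut_sq_le_osc _ τ _)
  have hfactor : |s * s - t * t| ≤ √(4 * osc (χ k) τ) * s :=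
    calc |s * s - t * t| = |s - t| * (s + t) := by
          rw [← abs_of_nonneg (add_nonneg hs ht), ← abs_mul]
          ring_nf
      _ ≤ √(osc (χ k) τ) * (s + s) := by gcongr
      _ = √(4 * osc (χ k) τ) * s := by
          rw [Real.sqrt_mul (by norm_num), show (4 : ℝ) = 2 ^ 2 by norm_num,
            Real.sqrt_sq zero_le_two]
          ring
  rw [cutMul, norm_mul, Complex.norm_real, Real.norm_of_nonneg hs, ← mul_assoc]
  exact mul_le_mul_of_nonneg_right hfactor (norm_nonneg _)

lemma wnormSq_d_cutMul_cutMul_le (k : ℕ) {i : ℕ} (hi : i + 1 ≤ n) {u : (Fin (i + 1) → V) → ℂ}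
    (hdu : MemWL2 (W.m (i + 1)) (d G i u)) :
    wnormSq (W.m (i + 1)) (d G i (cutMul (χ k) (cutMul (χ k) u))) ≤
      2 * ((i + 2) ^ 2 * (4 * C i * wnormSq (W.m i) (cutMul (χ k) u))) +
        2 * wnormSq (W.m (i + 1)) (d G i u) := by
  have hρ : ∀ τ : Fin (i + 2) → V, 0 ≤ 4 * osc (χ k) τ := fun τ =>
    mul_nonneg zero_le_four (osc_nonneg _ τ)
  have henergy : ∀ x, cofaceSum W (fun τ : Fin (i + 2) → V => 4 * osc (χ k) τ) x ≤
      4 * C i * W.m i x := fun x => by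
    simp only [cofaceSum, mul_left_comm _ (4 : ℝ), tsum_mul_left, mul_assoc]
    exact mul_le_mul_of_nonneg_left (hχ.energy_le k i hi x) zero_le_four
  have hcut : MemWL2 (W.m i) (cutMul (χ k) u) :=
    .of_finite_support _ (hχ.finite_support_cutMul k u)
  obtain ⟨herr_mem, herr_le⟩ := memWL2_and_wnormSq_le_of_norm_le_sum_faces W hi hρ
    (fun τ σ => by rw [osc_comp_perm]) (summable_sq_mul_cofaceSum hρ henergy hcut)
    (hχ.norm_d_cutMul_cutMul_sub_le k u)
  have hle : ∀ τ, ‖cutMul (χ k) (cutMul (χ k) (d G i u)) τ‖ ≤ ‖d G i u τ‖ := fun τ =>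
    (hχ.norm_cutMul_le k _ τ).trans (hχ.norm_cutMul_le k _ τ)
  have hadd := wnormSq_add_le (W.nonneg _) herr_mem (hdu.of_norm_le (W.nonneg _) hle)
  rw [sub_add_cancel] at hadd
  refine hadd.trans ?_
  gcongr
  · exact herr_le.trans (mul_le_mul_of_nonneg_left (tsum_sq_mul_cofaceSum_le hρ henergy hcut)
      (by positivity))
  · exact wnormSq_le_of_norm_le (W.nonneg _) hdu hle

/-- Test `d δ v` against `χ_k² δ v`. -/
lemma memWL2_delta {i : ℕ} (hi : i + 1 ≤ n) {v : (Fin (i + 2) → V) → ℂ} (hva : IsAlternating v)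
    (hv : MemWL2 (W.m (i + 1)) v) (hdδv : MemWL2 (W.m (i + 1)) (d G i (delta G W i v))) :
    MemWL2 (W.m i) (delta G W i v) := by
  set g := delta G W i v with hg
  set P := wnormSq (W.m (i + 1)) (d G i g)
  set Q := wnormSq (W.m (i + 1)) v
  have hP : 0 ≤ P := wnormSq_nonneg (W.nonneg _) _
  have hQ : 0 ≤ Q := wnormSq_nonneg (W.nonneg _) _
  have hC := (hχ.pos i).le
  refine MemWL2.of_eventually_eq (W.nonneg i) (B := 2 * P * Q + 8 * C i * Q + 1)
    (fun k => .of_finite_support _ (hχ.finite_support_cutMul k g)) (fun k => ?_)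
    (hχ.eventually_cutMul_eq g)
  set N := wnormSq (W.m i) (cutMul (χ k) g) with hN
  have hN0 : 0 ≤ N := wnormSq_nonneg (W.nonneg _) _
  have hwip : wip (W.m i) (cutMul (χ k) (cutMul (χ k) g)) g = N := by
    rw [hN, ← wip_self]
    refine tsum_congr fun x => ?_
    simp only [cutMul, map_mul, Complex.conj_ofReal]
    ring
  have hgreen : ‖wip (W.m (i + 1)) (d G i (cutMul (χ k) (cutMul (χ k) g))) v‖ = (i + 2) * N := by
    rw [green_left W hi (hχ.finite_support_cutMul k _) hva, ← hg, hwip, norm_mul,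
      Complex.norm_real, Complex.norm_real, Real.norm_eq_abs, Real.norm_of_nonneg hN0,
      abs_greenConst]
  have hcs : ((i + 2) * N) ^ 2 ≤ (2 * ((i + 2) ^ 2 * (4 * C i * N)) + 2 * P) * Q := by
    rw [← hgreen]
    exact (norm_wip_sq_le (W.nonneg _)
      (.of_finite_support _ (finite_support_d (hχ.finite_support_cutMul k _))) hv).trans
      (mul_le_mul_of_nonneg_right (hχ.wnormSq_d_cutMul_cutMul_le k hi hdδv) hQ)
  have hquad : N ^ 2 ≤ 2 * P * Q + 8 * C i * Q * N := by
    have hone : (1 : ℝ) ≤ (i + 2) ^ 2 := one_le_pow₀ (by linarith [i.cast_nonneg (α := ℝ)])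
    refine le_of_mul_le_mul_left ?_ (zero_lt_one.trans_le hone)
    nlinarith [mul_le_mul_of_nonneg_right hone (mul_nonneg hP hQ)]
  by_contra! hlt
  nlinarith [mul_nonneg hC hQ, mul_nonneg hP hQ]

/-- In each degree one of the two terms of the Laplacian is bounded, by the parity of the degree. -/
lemma memWL2_upLaplacian_and_downLaplacian {i : ℕ} (hi : i ≤ n) {u : (Fin (i + 1) → V) → ℂ}
    (hu : MemWL2 (W.m i) u) (hL : MemWL2 (W.m i) (Lblock G W i u)) :
    MemWL2 (W.m i) (upLaplacian W i u) ∧ MemWL2 (W.m i) (downLaplacian W i u) := by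
  rw [Lblock_eq_add] at hL
  have hbounded : MemWL2 (W.m i) (upLaplacian W i u) ∨ MemWL2 (W.m i) (downLaplacian W i u) := by
    rcases i.even_or_odd with heven | hodd
    · right
      cases i with
      | zero => exact MemWL2.zero _
      | succ i =>
        have hodd : Odd i := Nat.not_even_iff_odd.1 (Nat.even_add_one.1 heven)
        exact hχ.memWL2_d_of_odd hi hodd (hχ.memWL2_delta_of_odd hi hodd hu)
    · left
      rw [upLaplacian]
      split_ifs with hi'
      · exact hχ.memWL2_delta_of_odd hi' hodd (hχ.memWL2_d_of_odd hi' hodd hu)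
      · exact MemWL2.zero _
  rcases hbounded with hup | hdown
  · exact ⟨hup, by simpa only [add_sub_cancel_left] using hL.sub (W.nonneg i) hup⟩
  · exact ⟨by simpa only [add_sub_cancel_right] using hL.sub (W.nonneg i) hdown, hdown⟩

end IsCutoff

/-! ### Symmetry of the Laplacian -/

section Symmetry

open ComplexConjugate

variable {G : WG V} {n : ℕ} {W : CliqueWeights G n}

/-- The space of `i`-cochains, finitely supported or not. -/
def cochains (G : WG V) (i : ℕ) : Submodule ℂ ((Fin (i + 1) → V) → ℂ) where
  carrier := {f | IsCochain G i f}
  add_mem' {f g} hf hg :=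
    ⟨fun x σ => by simp only [Pi.add_apply, hf.1 x σ, hg.1 x σ, mul_add],
      fun x hx => by simp only [Pi.add_apply, hf.2 x hx, hg.2 x hx, add_zero]⟩
  zero_mem' := ⟨fun _ _ => (mul_zero _).symm, fun _ _ => rfl⟩
  smul_mem' c f hf :=
    ⟨fun x σ => by simp only [Pi.smul_apply, hf.1 x σ, smul_eq_mul, mul_left_comm],
      fun x hx => by simp only [Pi.smul_apply, hf.2 x hx, smul_zero]⟩

/-- The space `C_c^i(V)` of finitely supported `i`-cochains. -/
def finCochains (G : WG V) (i : ℕ) : Submodule ℂ ((Fin (i + 1) → V) → ℂ) where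
  carrier := {f | IsCochain G i f ∧ (support f).Finite}
  add_mem' {f g} hf hg :=
    ⟨(cochains G i).add_mem hf.1 hg.1, (hf.2.union hg.2).subset (support_add f g)⟩
  zero_mem' := ⟨(cochains G i).zero_mem, by simp⟩
  smul_mem' c f hf :=
    ⟨(cochains G i).smul_mem c hf.1, hf.2.subset (support_const_smul_subset c f)⟩

lemma isClosed_cochains (G : WG V) (i : ℕ) :
    IsClosed (cochains G i : Set ((Fin (i + 1) → V) → ℂ)) := by
  have hinter : (cochains G i : Set ((Fin (i + 1) → V) → ℂ)) =
      (⋂ x, ⋂ σ : Equiv.Perm (Fin (i + 1)),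
          {f | f (x ∘ σ) = ((Equiv.Perm.sign σ : ℤ) : ℂ) * f x}) ∩
        ⋂ x, ⋂ _ : ¬ IsSimplex G x, {f | f x = 0} := by
    ext f
    simp only [cochains, IsCochain, IsAlternating, Submodule.coe_set_mk, AddSubmonoid.coe_set_mk,
      AddSubsemigroup.coe_set_mk, mem_ofPred_eq, mem_inter_iff, mem_iInter]
  rw [hinter]
  refine IsClosed.inter ?_ ?_
  · exact isClosed_iInter fun x => isClosed_iInter fun σ => isClosed_eq (by fun_prop) (by fun_prop)
  · exact isClosed_iInter fun x => isClosed_iInter fun _ => isClosed_eq (by fun_prop) (by fun_prop)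

lemma isCochain_upLaplacian (W : CliqueWeights G n) {i : ℕ} {f : (Fin (i + 1) → V) → ℂ}
    (hf : IsCochain G i f) : IsCochain G i (upLaplacian W i f) := by
  rw [upLaplacian]
  split_ifs with h
  · exact isCochain_delta W h (isCochain_d hf)
  · exact (cochains G i).zero_mem

lemma isCochain_downLaplacian (W : CliqueWeights G n) {i : ℕ} (hi : i ≤ n)
    {f : (Fin (i + 1) → V) → ℂ} (hf : IsCochain G i f) : IsCochain G i (downLaplacian W i f) := by
  cases i with
  | zero => exact (cochains G 0).zero_mem
  | succ i => exact isCochain_d (isCochain_delta W hi hf)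

lemma isCochain_Lblock (W : CliqueWeights G n) {i : ℕ} (hi : i ≤ n) {f : (Fin (i + 1) → V) → ℂ}
    (hf : IsCochain G i f) : IsCochain G i (Lblock G W i f) := by
  rw [Lblock_eq_add]
  exact (cochains G i).add_mem (isCochain_upLaplacian W hf) (isCochain_downLaplacian W hi hf)

lemma finite_support_upLaplacian (W : CliqueWeights G n) (i : ℕ) {f : (Fin (i + 1) → V) → ℂ}
    (hf : (support f).Finite) : (support (upLaplacian W i f)).Finite := by
  rw [upLaplacian]
  split_ifs
  · exact finite_support_delta W i (finite_support_d hf)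
  · simp

lemma finite_support_downLaplacian (W : CliqueWeights G n) {i : ℕ} {f : (Fin (i + 1) → V) → ℂ}
    (hf : (support f).Finite) : (support (downLaplacian W i f)).Finite := by
  cases i with
  | zero => simp [downLaplacian]
  | succ i => exact finite_support_d (finite_support_delta W i hf)

lemma finite_support_Lblock (W : CliqueWeights G n) (i : ℕ) {f : (Fin (i + 1) → V) → ℂ}
    (hf : (support f).Finite) : (support (Lblock G W i f)).Finite := by
  rw [Lblock_eq_add]
  exact ((finite_support_upLaplacian W i hf).union (finite_support_downLaplacian W hf)).subset
    (support_add _ _)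

/-- The block `L_i` as a linear operator on the functions on oriented `i`-simplices. -/
noncomputable def laplacian (W : CliqueWeights G n) {i : ℕ} (hi : i ≤ n) :
    ((Fin (i + 1) → V) → ℂ) →ₗ[ℂ] ((Fin (i + 1) → V) → ℂ) where
  toFun := Lblock G W i
  map_add' f g := by
    have hup : upLaplacian W i (f + g) = upLaplacian W i f + upLaplacian W i g := by
      simp only [upLaplacian]
      split_ifs with h
      · rw [d_add, delta_add W h]
      · rw [add_zero]
    have hdown : downLaplacian W i (f + g) = downLaplacian W i f + downLaplacian W i g := by
      cases i with
      | zero => exact (add_zero _).symm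
      | succ i => simp only [downLaplacian, delta_add W hi, d_add]
    simp only [Lblock_eq_add, hup, hdown, add_add_add_comm]
  map_smul' c f := by
    have hup : upLaplacian W i (c • f) = c • upLaplacian W i f := by
      simp only [upLaplacian]
      split_ifs
      · rw [d_smul, delta_smul]
      · rw [smul_zero]
    have hdown : downLaplacian W i (c • f) = c • downLaplacian W i f := by
      cases i with
      | zero => exact (smul_zero c).symm
      | succ i => simp only [downLaplacian, delta_smul, d_smul]
    simp only [Lblock_eq_add, hup, hdown, smul_add, RingHom.id_apply]

lemma wip_delta_d_comm {i : ℕ} {f g : (Fin (i + 1) → V) → ℂ}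
    (hfg : wip (W.m (i + 1)) (d G i f) (d G i g) =
      greenConst i * wip (W.m i) f (delta G W i (d G i g)))
    (hgf : wip (W.m (i + 1)) (d G i g) (d G i f) =
      greenConst i * wip (W.m i) g (delta G W i (d G i f))) :
    wip (W.m i) (delta G W i (d G i f)) g = wip (W.m i) f (delta G W i (d G i g)) := by
  have hconj := congrArg conj hgf
  rw [map_mul, wip_conj, wip_conj, Complex.conj_ofReal, hfg] at hconj
  exact (mul_left_cancel₀ (greenConst_ne_zero i) hconj).symm

lemma wip_d_delta_comm {i : ℕ} {f g : (Fin (i + 2) → V) → ℂ}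
    (hfg : wip (W.m (i + 1)) (d G i (delta G W i f)) g =
      greenConst i * wip (W.m i) (delta G W i f) (delta G W i g))
    (hgf : wip (W.m (i + 1)) (d G i (delta G W i g)) f =
      greenConst i * wip (W.m i) (delta G W i g) (delta G W i f)) :
    wip (W.m (i + 1)) (d G i (delta G W i f)) g = wip (W.m (i + 1)) f (d G i (delta G W i g)) := by
  have hconj := congrArg conj hgf
  rw [map_mul, wip_conj, wip_conj, Complex.conj_ofReal] at hconj
  rw [hfg, hconj]

lemma wip_Lblock_of_finite_support (W : CliqueWeights G n) {i : ℕ} (hi : i ≤ n)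
    {f g : (Fin (i + 1) → V) → ℂ} (hf : IsCochain G i f) (hfin : (support f).Finite)
    (hg : IsCochain G i g) :
    wip (W.m i) (Lblock G W i f) g = wip (W.m i) f (Lblock G W i g) := by
  have hup : wip (W.m i) (upLaplacian W i f) g = wip (W.m i) f (upLaplacian W i g) := by
    simp only [upLaplacian]
    split_ifs with h
    · exact wip_delta_d_comm (green_left W h hfin (isCochain_d hg).1)
        (green_right W h g (isCochain_d hf).1 (finite_support_d hfin))
    · rw [wip_zero_left, wip_zero_right]
  have hdown : wip (W.m i) (downLaplacian W i f) g = wip (W.m i) f (downLaplacian W i g) := by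
    cases i with
    | zero => exact (wip_zero_left _ _).trans (wip_zero_right _ _).symm
    | succ i =>
      exact wip_d_delta_comm (green_left W hi (finite_support_delta W i hfin) hg.1)
        (green_right W hi (delta G W i g) hf.1 hfin)
  rw [Lblock_eq_add, Lblock_eq_add, wip_add_left_of_finite_support _
    (finite_support_upLaplacian W i hfin) (finite_support_downLaplacian W hfin),
    wip_add_right_of_finite_support _ _ _ hfin, hup, hdown]

lemma IsCutoff.wip_Lblock {χ : ℕ → V → ℝ} {C : ℕ → ℝ} (hχ : IsCutoff W χ C) {i : ℕ} (hi : i ≤ n)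
    {u v : (Fin (i + 1) → V) → ℂ} (huc : IsCochain G i u) (hvc : IsCochain G i v)
    (hu : MemWL2 (W.m i) u) (hv : MemWL2 (W.m i) v) (hLu : MemWL2 (W.m i) (Lblock G W i u))
    (hLv : MemWL2 (W.m i) (Lblock G W i v)) :
    wip (W.m i) (Lblock G W i u) v = wip (W.m i) u (Lblock G W i v) := by
  obtain ⟨hup_u, hdown_u⟩ := hχ.memWL2_upLaplacian_and_downLaplacian hi hu hLu
  obtain ⟨hup_v, hdown_v⟩ := hχ.memWL2_upLaplacian_and_downLaplacian hi hv hLv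
  have hup : wip (W.m i) (upLaplacian W i u) v = wip (W.m i) u (upLaplacian W i v) := by
    simp only [upLaplacian] at hup_u hup_v ⊢
    split_ifs at hup_u hup_v ⊢ with h
    · have hdu := hχ.memWL2_d h huc hu hup_u
      have hdv := hχ.memWL2_d h hvc hv hup_v
      exact wip_delta_d_comm (hχ.wip_d_eq_wip_delta h hu hdu (isCochain_d hvc).1 hdv hup_v)
        (hχ.wip_d_eq_wip_delta h hv hdv (isCochain_d huc).1 hdu hup_u)
    · rw [wip_zero_left, wip_zero_right]
  have hdown : wip (W.m i) (downLaplacian W i u) v = wip (W.m i) u (downLaplacian W i v) := by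
    cases i with
    | zero => exact (wip_zero_left _ _).trans (wip_zero_right _ _).symm
    | succ i =>
      have hδu := hχ.memWL2_delta hi huc.1 hu hdown_u
      have hδv := hχ.memWL2_delta hi hvc.1 hv hdown_v
      exact wip_d_delta_comm (hχ.wip_d_eq_wip_delta hi hδu hdown_u hvc.1 hv hδv)
        (hχ.wip_d_eq_wip_delta hi hδv hdown_v huc.1 hu hδu)
  rw [Lblock_eq_add, Lblock_eq_add, wip_add_left (W.nonneg i) hup_u hdown_u hv,
    wip_add_right (W.nonneg i) hup_v hdown_v hu, hup, hdown]

end Symmetry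

/-! ### Essential self-adjointness -/

section EssentialSelfAdjointness

variable {G : WG V} {n : ℕ} {W : CliqueWeights G n}

lemma NullSeq.tendstoL2 {i : ℕ} {F : ℕ → (Fin (i + 1) → V) → ℂ} {f : (Fin (i + 1) → V) → ℂ}
    (h : NullSeq (W.m i) fun k => F k - f) : TendstoL2 W i F f := by
  simpa [TendstoL2, norm2, wnormSq] using h.tendsto.const_mul ((i + 1).factorial : ℝ)⁻¹

lemma cutMul_zero (χ : V → ℝ) (i : ℕ) : cutMul χ (0 : (Fin (i + 1) → V) → ℂ) = 0 :=
  funext fun _ => mul_zero _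

lemma cutMul_add (χ : V → ℝ) {i : ℕ} (f g : (Fin (i + 1) → V) → ℂ) :
    cutMul χ (f + g) = cutMul χ f + cutMul χ g :=
  funext fun _ => mul_add _ _ _

lemma add_Lblock_eq_zero_of_orthogonal (W : CliqueWeights G n) {i : ℕ} (hi : i ≤ n)
    {a b : (Fin (i + 1) → V) → ℂ} (ha : IsCochain G i a) (hb : IsCochain G i b)
    (horth : ∀ f ∈ finCochains G i, wip (W.m i) f a + wip (W.m i) (Lblock G W i f) b = 0) :
    a + Lblock G W i b = 0 := by
  refine eq_zero_of_forall_wip_eq_zero W hi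
    ((cochains G i).add_mem ha (isCochain_Lblock W hi hb)) fun f hf hfin => ?_
  rw [← wip_conj, wip_add_right_of_finite_support _ _ _ hfin,
    ← wip_Lblock_of_finite_support W hi hf hfin hb, horth f ⟨hf, hfin⟩, map_zero]

namespace IsCutoff

variable {χ : ℕ → V → ℝ} {C : ℕ → ℝ} (hχ : IsCutoff W χ C)
include hχ

lemma exists_nullSeq_Lblock_sub {i : ℕ} (hi : i ≤ n) {u : (Fin (i + 1) → V) → ℂ}
    (huc : IsCochain G i u) (hu : MemWL2 (W.m i) u) (hLu : MemWL2 (W.m i) (Lblock G W i u)) :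
    ∃ φ : ℕ → (Fin (i + 1) → V) → ℂ, (∀ k, φ k ∈ finCochains G i) ∧
      NullSeq (W.m i) (fun k => φ k - u) ∧
      NullSeq (W.m i) fun k => Lblock G W i (φ k) - Lblock G W i u := by
  refine exists_nullSeq_graph_sub_of_orthogonal (W.nonneg i)
    (A := cochains G i) (S := finCochains G i) (T := laplacian W hi) (fun f hf => hf.1)
    (isClosed_cochains G i) (fun φ f hf => ⟨fun x σ => ?_, fun x hx => ?_⟩)
    (fun f hf x hx => hf.2 x fun hs => ((weight_pos_iff W hi x).2 hs).ne' hx)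
    (fun f hf => .of_finite_support _ hf.2) (fun f hf => isCochain_Lblock W hi hf)
    (fun f hf => .of_finite_support _ (finite_support_Lblock W i hf.2)) huc hu hLu
    fun a ha b hb ha2 hb2 horth => ?_
  · simp only [weight_comp_perm W hi, hf.1 x σ, mul_left_comm]
  · simp only [hf.2 x hx, mul_zero]
  have hab := add_Lblock_eq_zero_of_orthogonal W hi ha hb horth
  have hLb : MemWL2 (W.m i) (Lblock G W i b) := eq_neg_of_add_eq_zero_right hab ▸ ha2.neg
  calc wip (W.m i) u a + wip (W.m i) (Lblock G W i u) b
      = wip (W.m i) u a + wip (W.m i) u (Lblock G W i b) := by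
        rw [hχ.wip_Lblock hi huc hb hu hb2 hLu hLb]
    _ = 0 := by rw [← wip_add_right (W.nonneg i) ha2 hLb hu, hab, wip_zero_right]

lemma esa_L : ESA_L W := by
  intro u hu hu2 hLu
  have happrox : ∀ i, ∃ φ : ℕ → (Fin (i + 1) → V) → ℂ, (∀ k, φ k ∈ finCochains G i) ∧
      (n < i → ∀ k, φ k = 0) ∧ NullSeq (W.m i) (fun k => φ k - u i) ∧
      (i ≤ n → NullSeq (W.m i) fun k => Lblock G W i (φ k) - Lblock G W i (u i)) := by
    intro i
    rcases le_or_gt i n with hi | hi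
    · obtain ⟨φ, hφ, hφu, hLφ⟩ := hχ.exists_nullSeq_Lblock_sub hi (hu.1 i) (hu2 i)
        (Dop_Dop W hu hi ▸ hLu i)
      exact ⟨φ, hφ, fun h => absurd hi h.not_ge, hφu, fun _ => hLφ⟩
    · refine ⟨fun _ => 0, fun _ => (finCochains G i).zero_mem, fun _ _ => rfl, ?_,
        fun h => absurd h hi.not_ge⟩
      simpa only [hu.2 i hi, sub_zero] using NullSeq.zero (W.m i)
  choose φ hφ hφ0 hφu hLφ using happrox
  have hfam : ∀ k, CochainFamily G n fun i => φ i k := fun k =>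
    ⟨fun i => (hφ i k).1, fun i hi => hφ0 i hi k⟩
  refine ⟨fun k i => φ i k, fun k => ⟨hfam k, fun i => (hφ i k).2⟩,
    fun i => (hφu i).tendstoL2, fun i => NullSeq.tendstoL2 ?_⟩
  rcases le_or_gt i n with hi | hi
  · simpa only [Dop_Dop W (hfam _) hi, Dop_Dop W hu hi] using hLφ i hi
  · simpa only [Dop_eq_zero W hi, sub_zero] using NullSeq.zero (W.m i)

lemma nullSeq_delta_cutMul_sub_cutMul_delta_of_cochainFamily
    {u : ∀ i : ℕ, (Fin (i + 1) → V) → ℂ} (hu : CochainFamily G n u) (hu2 : MemL2Family W u)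
    (i : ℕ) :
    NullSeq (W.m i) fun k =>
      delta G W i (cutMul (χ k) (u (i + 1))) - cutMul (χ k) (delta G W i (u (i + 1))) := by
  rcases le_or_gt (i + 1) n with hi | hi
  · exact hχ.nullSeq_delta_cutMul_sub_cutMul_delta hi (hu2 (i + 1))
  · simpa only [hu.2 (i + 1) hi, cutMul_zero, delta_zero, sub_zero] using NullSeq.zero (W.m i)

lemma nullSeq_Dop_cutMul_sub_cutMul_Dop {u : ∀ i : ℕ, (Fin (i + 1) → V) → ℂ}
    (hu : CochainFamily G n u) (hu2 : MemL2Family W u) (i : ℕ) :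
    NullSeq (W.m i) fun k =>
      Dop G W (fun j => cutMul (χ k) (u j)) i - cutMul (χ k) (Dop G W u i) := by
  rcases lt_or_ge n i with hi | hi
  · simpa only [Dop_eq_zero W hi, cutMul_zero, sub_zero] using NullSeq.zero (W.m i)
  have hδ := hχ.nullSeq_delta_cutMul_sub_cutMul_delta_of_cochainFamily hu hu2 i
  cases i with
  | zero => exact hδ
  | succ i =>
    simpa only [Dop_succ W hi, cutMul_add, add_sub_add_comm] using
      (hχ.nullSeq_d_cutMul_sub_cutMul_d hi (hu2 i)).add (W.nonneg _) hδ

lemma esa_D : ESA_D W := by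
  intro u hu hu2 hDu
  refine ⟨fun k i => cutMul (χ k) (u i),
    fun k => ⟨⟨fun i => isCochain_cutMul _ (hu.1 i), fun i hi => ?_⟩,
      fun i => hχ.finite_support_cutMul k (u i)⟩,
    fun i => (hχ.nullSeq_cutMul_sub (hu2 i)).tendstoL2, fun i => NullSeq.tendstoL2 ?_⟩
  · simp only [hu.2 i hi, cutMul_zero]
  · simpa only [sub_add_sub_cancel] using (hχ.nullSeq_Dop_cutMul_sub_cutMul_Dop hu hu2 i).add
      (W.nonneg i) (hχ.nullSeq_cutMul_sub (hDu i))

end IsCutoff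

theorem esa_of_weighted_regularization_general {G : WG V} {n : ℕ} {W : CliqueWeights G n}
    (hχ : GloballyChiComplete W) : ESA_D W ∧ ESA_L W := by
  obtain ⟨χ, C, hcut⟩ := exists_isCutoff hχ
  exact ⟨hcut.esa_D, hcut.esa_L⟩

end EssentialSelfAdjointness

/-- Weighted regularization: let `S_n^comb` be the combinatorial clique
`n`-simplicial complex over a locally finite graph `(V, E)`.  If there exists a family of
weights `(m_i)` (strictly positive exactly on simplices and permutation invariant, i.e. a
`CliqueWeights` structure whose underlying adjacency is that of `(V, E)`) making the
weighted complex globally `χ`-complete, then the Gauss–Bonnet operator `D = d + δ` and the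
Hodge Laplacian `L = D²` are essentially self-adjoint on `⊕_{i=0}^n C_c^i(V)` with respect
to the Hilbert structure `H = ⊕_{i=0}^n ℓ²(m_i)` determined by these weights. -/
theorem esa_of_weighted_regularization
    {V : Type*} [Countable V] (Gs : SimpleGraph V)
    (hlf : ∀ x, (Gs.neighborSet x).Finite) {n : ℕ} (hn : 2 ≤ n)
    (G : WG V) (W : CliqueWeights G n)
    (hadj : ∀ x y, G.Adj x y ↔ Gs.Adj x y)
    (hχ : GloballyChiComplete W) :
    ESA_D W ∧ ESA_L W :=
  esa_of_weighted_regularization_general hχ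

end DiscreteHodge
end

section
/- Hierarchy (global implies regional): if the weighted oriented clique n-simplicial complex S_n is globally χ-complete, then for every subset Λ ⊆ V, the restricted complex S_n|_Λ, obtained by keeping only the simplices with all vertices in Λ, is globally χ-complete (with exhaustion (O_k ∩ Λ) and the restricted cut-off functions). -/
/-!
On tuples with all vertices in `Λ`, a cut-off function and its restriction to `Λ` have the same
averages, so the plateau condition is inherited. Likewise the coboundary over `Λ` of the restricted
cut-off is the coboundary of the cut-off itself over any region `Λ' ⊇ Λ`, set to zero off the
simplices inside `Λ`. Passing to `Λ` therefore only deletes nonnegative terms from the energy sum at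
a simplex, which is a finite sum by local finiteness, and the energy bound over `Λ'` holds over `Λ`
with the same constant.
-/

open Filter Function Set
open scoped Topology

namespace DiscreteHodge

variable {V : Type*}

lemma avg_indicator (χ : V → ℝ) {Λ : Set V} {k : ℕ} {x : Fin k → V} (hx : ∀ a, x a ∈ Λ) :
    avg (Λ.indicator χ) x = avg χ x := by
  simp only [avg, Set.indicator_of_mem (hx _)]

section Coboundary

variable (G : WG V) {Λ Λ' : Set V} {i : ℕ}

lemma dOn_congr {f g : (Fin (i + 1) → V) → ℂ} (h : ∀ x, (∀ a, x a ∈ Λ) → f x = g x) :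
    dOn G Λ i f = dOn G Λ i g :=
  Set.indicator_congr fun z hz => Finset.sum_congr rfl fun a _ => by
    rw [h (z ∘ a.succAbove) fun b => hz.2 _]

lemma dOn_eq_indicator_dOn (hΛ : Λ ⊆ Λ') (f : (Fin (i + 1) → V) → ℂ) :
    dOn G Λ i f = {z | ∀ a, z a ∈ Λ}.indicator (dOn G Λ' i f) := by
  unfold dOn
  rw [Set.indicator_indicator]
  congr 1
  ext z
  exact ⟨fun ⟨hz, hzΛ⟩ => ⟨hzΛ, hz, fun a => hΛ (hzΛ a)⟩, fun ⟨hzΛ, hz, _⟩ => ⟨hz, hzΛ⟩⟩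

lemma norm_dOn_avg_indicator_le (hΛ : Λ ⊆ Λ') (χ : V → ℝ) (z : Fin (i + 2) → V) :
    ‖dOn G Λ i (fun σ => avg (Λ.indicator χ) σ) z‖ ≤ ‖dOn G Λ' i (fun σ => avg χ σ) z‖ := by
  rw [dOn_congr G fun _ hx => avg_indicator χ hx, dOn_eq_indicator_dOn G hΛ]
  exact norm_indicator_le_norm_self _ _

end Coboundary

lemma finite_setOf_isSimplex_snoc (G : WG V) {k : ℕ} (x : Fin (k + 1) → V) :
    {y | IsSimplex G (Fin.snoc x y : Fin (k + 2) → V)}.Finite := by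
  refine (G.locFin (x 0)).subset fun y hy => ?_
  have hadj := hy.2 (Fin.castSucc 0) (Fin.last (k + 1)) (Fin.castSucc_lt_last 0).ne
  rwa [Fin.snoc_castSucc (α := fun _ => V), Fin.snoc_last (α := fun _ => V)] at hadj

section Energy

variable {G : WG V} {n : ℕ} (W : CliqueWeights G n)

/-- The contribution of the vertex `y` to the sum in `gradEnergyOn W Λ j χ x`, without the
prefactor `1 / m_j(x)`. -/
noncomputable def gradEnergyTermOn (Λ : Set V) (j : ℕ) (χ : V → ℝ) (x : Fin (j + 1) → V) :
    V → ℝ :=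
  Λ.indicator fun y => W.m (j + 1) (Fin.snoc x y) *
    ‖dOn G Λ j (fun σ : Fin (j + 1) → V => avg χ σ) (Fin.snoc x y)‖ ^ 2

lemma summable_gradEnergyTermOn (Λ : Set V) (j : ℕ) (χ : V → ℝ) (x : Fin (j + 1) → V) :
    Summable (gradEnergyTermOn W Λ j χ x) := by
  refine summable_of_hasFiniteSupport ((finite_setOf_isSimplex_snoc G x).subset fun y hy => ?_)
  by_contra hns
  have hd : dOn G Λ j (fun σ => avg χ σ) (Fin.snoc x y) = 0 :=
    Set.indicator_of_notMem (fun hz => hns hz.1) _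
  exact hy (by simp [gradEnergyTermOn, hd])

variable {Λ Λ' : Set V}

lemma gradEnergyTermOn_indicator_le (hΛ : Λ ⊆ Λ') (j : ℕ) (χ : V → ℝ) (x : Fin (j + 1) → V) :
    gradEnergyTermOn W Λ j (Λ.indicator χ) x ≤ gradEnergyTermOn W Λ' j χ x := by
  have hterm (y : V) :
      W.m (j + 1) (Fin.snoc x y) *
          ‖dOn G Λ j (fun σ => avg (Λ.indicator χ) σ) (Fin.snoc x y)‖ ^ 2 ≤
        W.m (j + 1) (Fin.snoc x y) * ‖dOn G Λ' j (fun σ => avg χ σ) (Fin.snoc x y)‖ ^ 2 := by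
    have hm := W.nonneg (j + 1) (Fin.snoc x y)
    gcongr
    exact norm_dOn_avg_indicator_le G hΛ χ _
  have hnonneg (y : V) :
      0 ≤ W.m (j + 1) (Fin.snoc x y) * ‖dOn G Λ' j (fun σ => avg χ σ) (Fin.snoc x y)‖ ^ 2 :=
    mul_nonneg (W.nonneg _ _) (sq_nonneg _)
  exact (Set.indicator_mono hterm).trans (Set.indicator_le_indicator_of_subset hΛ hnonneg)

lemma gradEnergyOn_indicator_le (hΛ : Λ ⊆ Λ') (j : ℕ) (χ : V → ℝ) (x : Fin (j + 1) → V) :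
    gradEnergyOn W Λ j (Λ.indicator χ) x ≤ gradEnergyOn W Λ' j χ x :=
  mul_le_mul_of_nonneg_left
    ((summable_gradEnergyTermOn W Λ j (Λ.indicator χ) x).tsum_le_tsum
      (gradEnergyTermOn_indicator_le W hΛ j χ x) (summable_gradEnergyTermOn W Λ' j χ x))
    (inv_nonneg.2 (W.nonneg j x))

end Energy

theorem globallyChiCompleteOn_of_globallyChiComplete_general
    {G : WG V} {n : ℕ} (W : CliqueWeights G n) {Λ Λ' : Set V} (hΛ : Λ ⊆ Λ')
    {O : ℕ → Set V} {χ : ℕ → V → ℝ} (h : IsChiWitnessOn W Λ' O χ) :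
    IsChiWitnessOn W Λ (fun k => O k ∩ Λ) (fun k => Λ.indicator (χ k)) := by
  obtain ⟨hfin, hmono, -, hcover, hsupp, hplateau, C, hC, henergy⟩ := h
  refine ⟨fun k => (hfin k).inter_of_left Λ,
    fun _ _ hkl => Set.inter_subset_inter_left Λ (hmono hkl),
    fun _ => Set.inter_subset_right, ?exhaustion, fun k => ?support, ?plateau, C, hC, ?energy⟩
  case exhaustion =>
    rw [← Set.iUnion_inter, hcover, Set.inter_eq_right.2 hΛ]
  case support =>
    rw [Set.support_indicator]
    exact (hsupp k).inter_of_right Λ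
  case plateau =>
    intro k i hi x hx hxΛ hxO
    rw [avg_indicator (χ k) hxΛ]
    exact hplateau k i hi x hx (fun a => hΛ (hxΛ a)) fun a => (hxO a).1
  case energy =>
    intro k j hj x hx hxΛ
    exact (gradEnergyOn_indicator_le W hΛ j (χ k) x).trans
      (henergy k j hj x hx fun a => hΛ (hxΛ a))

/-- Hierarchy (global implies regional): if the weighted oriented clique
`n`-simplicial complex is globally `χ`-complete, then for every subset `Λ ⊆ V` the
restricted complex `S_n|_Λ` (keeping only simplices with all vertices in `Λ`) is globally
`χ`-complete, with exhaustion `(O_k ∩ Λ)` and the restricted cut-off functions. -/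
theorem globallyChiCompleteOn_of_globallyChiComplete
    {V : Type*} [Countable V] (G : WG V) {n : ℕ} (hn : 2 ≤ n) (W : CliqueWeights G n)
    (O : ℕ → Set V) (χ : ℕ → V → ℝ)
    (h : IsChiWitnessOn W Set.univ O χ) (Λ : Set V) :
    IsChiWitnessOn W Λ (fun k => O k ∩ Λ) (fun k => Λ.indicator (χ k)) :=
  globallyChiCompleteOn_of_globallyChiComplete_general W (Set.subset_univ Λ) h

end DiscreteHodge
end
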